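/- arXiv:1804.01589 — 2 statements merged into one kernel-verified Lean document; each statement's English description precedes it below -/
import Mathlib

section
/- With the generic-elements setup (G abelian, U a G-graded simple algebra finite-dimensional over F = Γ(U)_e, F_U the algebra of generic elements inside Ũ = F̃ ⊗_F U): the central localization S_U^{-1}F_U, where S_U = Z(M(F_U))_e \ {0}, is a G-graded simple algebra whose multiplication algebra M(S_U^{-1}F_U) satisfies an ordinary polynomial identity. -/
noncomputable section

variable (K : Type*) [Field K]
variable {G : Type*} [CommGroup G] [DecidableEq G]
variable {A : Type*} [NonUnitalNonAssocSemiring A] [Module K A]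
  [SMulCommClass K A A] [IsScalarTower K A A]

/-- `𝒜` is a `G`-grading of the (not necessarily associative or unital) algebra `A`. -/
def IsAlgGrading (𝒜 : G → Submodule K A) : Prop :=
  DirectSum.IsInternal 𝒜 ∧ ∀ (g h : G), ∀ a ∈ 𝒜 g, ∀ b ∈ 𝒜 h, a * b ∈ 𝒜 (g * h)

/-- A submodule is homogeneous if it is the sum of its intersections with the components. -/
def IsHomogSubmodule (𝒜 : G → Submodule K A) (I : Submodule K A) : Prop :=
  I = ⨆ g, I ⊓ 𝒜 g

/-- two-sided ideal of a nonassociative algebra -/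
def IsMulIdeal (I : Submodule K A) : Prop :=
  ∀ a : A, ∀ x ∈ I, a * x ∈ I ∧ x * a ∈ I

/-- graded simple: `A·A ≠ 0` and no nontrivial homogeneous ideals. -/
def IsGradedSimple (𝒜 : G → Submodule K A) : Prop :=
  (∃ a b : A, a * b ≠ 0) ∧
    ∀ I : Submodule K A, IsMulIdeal K I → IsHomogSubmodule K 𝒜 I → I = ⊥ ∨ I = ⊤

/-- The multiplication algebra: the subalgebra of `End_K A` generated by left and right
multiplications. -/
def MultAlg : NonUnitalSubalgebra K (Module.End K A) :=
  NonUnitalAlgebra.adjoin K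
    (Set.range (LinearMap.mulLeft K (A := A)) ∪ Set.range (LinearMap.mulRight K (A := A)))

/-- The homogeneous component of degree `h` of `End_K A`: maps sending `𝒜 g` into `𝒜 (h*g)`. -/
def endGrading (𝒜 : G → Submodule K A) (h : G) : Submodule K (Module.End K A) where
  carrier := {φ | ∀ g : G, ∀ x ∈ 𝒜 g, φ x ∈ 𝒜 (h * g)}
  add_mem' := fun hf hg g x hx => (𝒜 _).add_mem (hf g x hx) (hg g x hx)
  zero_mem' := fun g x hx => (𝒜 _).zero_mem
  smul_mem' := fun c f hf g x hx => (𝒜 _).smul_mem c (hf g x hx)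

/-- The centroid of `A`: endomorphisms commuting with all left and right multiplications. -/
def centroid : Submodule K (Module.End K A) where
  carrier := {φ | ∀ a x : A, φ (a * x) = a * φ x ∧ φ (x * a) = φ x * a}
  add_mem' := by
    intro f g hf hg a x
    refine ⟨?_, ?_⟩ <;>
      simp [LinearMap.add_apply, (hf a x).1, (hg a x).1, (hf a x).2, (hg a x).2, mul_add, add_mul]
  zero_mem' := by intro a x; simp
  smul_mem' := by
    intro c f hf a x
    refine ⟨?_, ?_⟩ <;>
      simp [LinearMap.smul_apply, (hf a x).1, (hf a x).2, mul_smul_comm, smul_mul_assoc]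

/-- The graded centroid `Γ(A)`: the sums of homogeneous centroid elements. -/
def gradedCentroid (𝒜 : G → Submodule K A) : Submodule K (Module.End K A) :=
  ⨆ h : G, centroid K ⊓ endGrading K 𝒜 h

/-- graded polynomial identity, variables indexed by `G × ℕ`, the variable `(g, i)` having
degree `g`. -/
def IsGradedPI (𝒜 : G → Submodule K A) (f : FreeNonUnitalNonAssocAlgebra K (G × ℕ)) : Prop :=
  ∀ v : G × ℕ → A, (∀ p, v p ∈ 𝒜 p.1) → FreeNonUnitalNonAssocAlgebra.lift K v f = 0

/-- ordinary polynomial identity of a not necessarily associative algebra -/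
def IsPI (f : FreeNonUnitalNonAssocAlgebra K ℕ) : Prop :=
  ∀ v : ℕ → A, FreeNonUnitalNonAssocAlgebra.lift K v f = 0

/-- A subset `S` of an associative unital `K`-algebra `B` satisfies an ordinary polynomial
identity. -/
def SatisfiesOrdinaryPI {B : Type*} [Semiring B] [Algebra K B] (S : Set B) : Prop :=
  ∃ f : FreeAlgebra K ℕ, f ≠ 0 ∧
    ∀ v : ℕ → B, (∀ i, v i ∈ S) → FreeAlgebra.lift K v f = 0

/-- isomorphism of `G`-graded algebras -/
def IsGradedIso {B : Type*} [NonUnitalNonAssocSemiring B] [Module K B]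
    (𝒜 : G → Submodule K A) (ℬ : G → Submodule K B) : Prop :=
  ∃ ψ : A ≃ₗ[K] B, (∀ x y : A, ψ (x * y) = ψ x * ψ y) ∧
    ∀ g : G, (𝒜 g).map (ψ : A →ₗ[K] B) = ℬ g

end

noncomputable section

variable (K : Type*) [Field K]

/-- `f` is an ordinary (associative) polynomial identity of the subset `S` of the associative
unital algebra `B`. -/
def IsAssocPIOn {B : Type*} [Semiring B] [Algebra K B] (S : Set B) (f : FreeAlgebra K ℕ) : Prop :=
  ∀ v : ℕ → B, (∀ i, v i ∈ S) → FreeAlgebra.lift K v f = 0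

end

noncomputable section

open TensorProduct

variable (F : Type*) [Field F] {G : Type*} [CommGroup G] [DecidableEq G]
variable (FF : Type*) [Field FF] [Algebra F FF] [Algebra (MvPolynomial (G × ℕ × ℕ) F) FF]
  [IsScalarTower F (MvPolynomial (G × ℕ × ℕ) F) FF]
variable {A : Type*} [NonUnitalNonAssocRing A] [Module F A] [SMulCommClass F A A]
  [IsScalarTower F A A]

/-- the set of generic elements `y_i^g = ∑_j t_{ij}^g ⊗ u_j^g` of `Ũ = FF ⊗ U`,
relative to the choice of bases `bU g` of the homogeneous components. -/
def genericElems (𝒜 : G → Submodule F A) (nU : G → ℕ)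
    (bU : ∀ g : G, Module.Basis (Fin (nU g)) F (𝒜 g)) : Set (FF ⊗[F] A) :=
  {x | ∃ (g : G) (i : Fin (nU g)), x = ∑ j : Fin (nU g),
    (algebraMap (MvPolynomial (G × ℕ × ℕ) F) FF (MvPolynomial.X (g, (i : ℕ), (j : ℕ)))) ⊗ₜ[F]
      ((bU g j : A))}

/-- the algebra of generic elements `F_U`, an `F`-subalgebra of `Ũ = FF ⊗ U`. -/
def genericAlg (𝒜 : G → Submodule F A) (nU : G → ℕ)
    (bU : ∀ g : G, Module.Basis (Fin (nU g)) F (𝒜 g)) : NonUnitalSubalgebra F (FF ⊗[F] A) :=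
  NonUnitalAlgebra.adjoin F (genericElems F FF 𝒜 nU bU)

/-- the degree-`g` component of an `F`-subalgebra `L` of `Ũ = FF ⊗ U`, induced by the grading
of `Ũ`. -/
def subComp (𝒜 : G → Submodule F A) (L : NonUnitalSubalgebra F (FF ⊗[F] A)) (g : G) :
    Submodule F ↥L where
  carrier := {x | (x : FF ⊗[F] A) ∈ (𝒜 g).baseChange FF}
  add_mem' := fun {x y} hx hy => by
    simpa using (((𝒜 g).baseChange FF).restrictScalars F).add_mem hx hy
  zero_mem' := by simp
  smul_mem' := fun c x hx => by
    simpa using (((𝒜 g).baseChange FF).restrictScalars F).smul_mem c hx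

/-- the degree-`e` component `Z(M(F_U))_e` of the center of the multiplication algebra of an
`F`-subalgebra `L` of `Ũ` (applied below to `L = F_U` and to its central localization). -/
def centerMultE (𝒜 : G → Submodule F A) (L : NonUnitalSubalgebra F (FF ⊗[F] A)) :
    Set (Module.End F ↥L) :=
  {m | m ∈ MultAlg F (A := ↥L) ∧ (∀ m' ∈ MultAlg F (A := ↥L), m * m' = m' * m) ∧
    m ∈ endGrading F (subComp F FF 𝒜 L) 1}

end

open TensorProduct

/-!
Let `Z` be the set of scalars of `F̃` that act on `F_U` as multiplication operators; under `θ` it is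
`Z(M(F_U))_e`. Since the identity component of the centroid of `U` is `F`, the algebra
`Ũ = F̃ ⊗ U` is graded simple over `F̃`, and since the generic matrices `(t_{ij}^g)` are invertible,
`F_U` spans `Ũ` over `F̃`. Hence every nonzero homogeneous ideal `I` of `S_U⁻¹ F_U` spans `Ũ`, and,
after clearing denominators, so does `I ∩ F_U`, component by component.

A nonzero `c ∈ Z` is a polynomial `p(t)` in the generic matrix entries, and `p(τ)` is a scalar
multiplication operator of the specialization of `F_U` at any `τ`. The matrices `τ` whose
specialization lies in `I ∩ F_U` span the space of all matrices over `F̃` and are stable under the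
infinite set `Z`, so `p(τ) ≠ 0` for one of them. Then `p(τ)` is an invertible scalar that maps
`S_U⁻¹ F_U` into `I`.

Multiplication operators of `S_U⁻¹ F_U` extend to `F̃`-linear operators on the finite-dimensional
space `Ũ`, so they satisfy a standard identity.
-/

noncomputable section

section StandardPolynomial

open Equiv (Perm)

/-- The standard polynomial `∑ σ, sign σ • x_{σ 0} ⋯ x_{σ (d - 1)}` of degree `d`; it vanishes on
every algebra of dimension less than `d`. -/
def standardPoly (F : Type*) [CommRing F] (d : ℕ) : FreeAlgebra F ℕ :=
  ∑ σ : Perm (Fin d), Perm.sign σ • (List.ofFn fun i => FreeAlgebra.ι F (σ i : ℕ)).prod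

lemma basisFreeMonoid_ofList {F X : Type*} [CommRing F] (l : List X) :
    FreeAlgebra.basisFreeMonoid F X (FreeMonoid.ofList l) = (l.map (FreeAlgebra.ι F)).prod := by
  simp [FreeAlgebra.basisFreeMonoid, FreeAlgebra.equivMonoidAlgebraFreeMonoid]

lemma standardPoly_ne_zero (F : Type*) [CommRing F] [Nontrivial F] (d : ℕ) :
    standardPoly F d ≠ 0 := by
  have word_injective : Function.Injective
      fun σ : Perm (Fin d) => FreeMonoid.ofList (List.ofFn fun i => (σ i : ℕ)) := fun σ τ h => by
    ext i
    exact congrFun (List.ofFn_inj.mp (FreeMonoid.ofList.injective h)) i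
  have h_ind := (FreeAlgebra.basisFreeMonoid F ℕ).linearIndependent.comp _ word_injective
  intro h_zero
  have := Fintype.linearIndependent_iff.mp h_ind (fun σ => ((Perm.sign σ : ℤ) : F))
    (by simpa [standardPoly, basisFreeMonoid_ofList, List.map_ofFn, Function.comp_def,
      Units.smul_def, Int.cast_smul_eq_zsmul] using h_zero) 1
  simp at this

lemma lift_standardPoly_eq_zero {F K E : Type*} [CommRing F] [Field K] [Ring E] [Algebra F E]
    [Algebra K E] [FiniteDimensional K E] {d : ℕ} (hd : Module.finrank K E < d) (v : ℕ → E) :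
    FreeAlgebra.lift F v (standardPoly F d) = 0 := by
  have h_dep : ¬ LinearIndependent K fun i : Fin d => v i := fun h_ind =>
    hd.not_ge (by simpa using h_ind.fintype_card_le_finrank)
  have h_alt := (MultilinearMap.alternatization
    (MultilinearMap.mkPiAlgebraFin K d E)).map_linearDependent _ h_dep
  rw [MultilinearMap.alternatization_apply] at h_alt
  simpa [standardPoly, map_list_prod, List.map_ofFn, Function.comp_def, Units.smul_def]
    using h_alt

end StandardPolynomial

section MulOps

variable (F K : Type*) {V : Type*} [CommRing F] [CommRing K] [Algebra F K]
  [NonUnitalNonAssocRing V] [Module F V] [Module K V] [IsScalarTower F K V]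
  [SMulCommClass K V V] [IsScalarTower K V V]

/-- The `F`-algebra of `K`-linear operators on `V` generated by the left and right multiplications
by the elements of `S`. With `S = V` and `F = K` this is the multiplication algebra of `V`. -/
def mulOps (S : Set V) : NonUnitalSubalgebra F (Module.End K V) :=
  NonUnitalAlgebra.adjoin F (LinearMap.mulLeft K '' S ∪ LinearMap.mulRight K '' S)

variable {F K}

lemma mulOps_mono {S T : Set V} (h : S ⊆ T) : mulOps F K S ≤ mulOps F K T :=
  NonUnitalAlgebra.adjoin_mono (Set.union_subset_union (Set.image_mono h) (Set.image_mono h))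

lemma apply_mem_of_mem_mulOps {S : Set V} {I N : Submodule F V} (hIN : I ≤ N)
    (hI : ∀ a ∈ S, ∀ x ∈ N, a * x ∈ I ∧ x * a ∈ I) {n : Module.End K V}
    (hn : n ∈ mulOps F K S) : ∀ x ∈ N, n x ∈ I := by
  induction hn using NonUnitalAlgebra.adjoin_induction with
  | mem n hn =>
    rcases hn with ⟨a, ha, rfl⟩ | ⟨a, ha, rfl⟩
    · exact fun x hx => (hI a ha x hx).1
    · exact fun x hx => (hI a ha x hx).2
  | add m n _ _ hm hn => exact fun x hx => I.add_mem (hm x hx) (hn x hx)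
  | zero => exact fun x _ => I.zero_mem
  | mul _ _ _ _ hm hn => exact fun x hx => hm _ (hIN (hn x hx))
  | smul r n _ hn => exact fun x hx => I.smul_mem r (hn x hx)

variable (F K) in
/-- The scalars `c : K` for which multiplication by `c` is a multiplication operator of `S`. For
`S = F_U` these are the elements of `Z(M(F_U))_e` viewed inside `F̃`. -/
def scalarMulOps (S : Set V) : NonUnitalSubalgebra F K :=
  (mulOps F K S).comap
    (((Algebra.ofId K (Module.End K V)).restrictScalars F : K →ₐ[F] Module.End K V) :
      K →ₙₐ[F] Module.End K V)

lemma mem_scalarMulOps {S : Set V} {c : K} :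
    c ∈ scalarMulOps F K S ↔ c • (1 : Module.End K V) ∈ mulOps F K S := by
  rw [← Algebra.algebraMap_eq_smul_one]
  rfl

end MulOps

lemma multAlg_eq_mulOps (F A : Type*) [Field F] [NonUnitalNonAssocRing A] [Module F A]
    [SMulCommClass F A A] [IsScalarTower F A A] :
    MultAlg F (A := A) = mulOps F F Set.univ := by
  rw [MultAlg, mulOps, Set.image_univ, Set.image_univ]

section Functoriality

variable {F P K B V : Type*} [CommRing F] [CommRing P] [CommRing K] [Algebra F P] [Algebra F K]
  [NonUnitalNonAssocRing B] [Module F B] [Module P B] [IsScalarTower F P B]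
  [SMulCommClass P B B] [IsScalarTower P B B]
  [NonUnitalNonAssocRing V] [Module F V] [Module K V] [IsScalarTower F K V]
  [SMulCommClass K V V] [IsScalarTower K V V]

variable (P K) in
/-- The pairs `(m, n)` of multiplication operators on `B` and `V` given by the same expression in
elements of `X ⊆ B` and in their images under `φ : B → V`. -/
def mulOpPairs (φ : B →ₙₐ[F] V) (X : Set B) :
    NonUnitalSubalgebra F (Module.End P B × Module.End K V) :=
  NonUnitalAlgebra.adjoin F
    ((fun b => (LinearMap.mulLeft P b, LinearMap.mulLeft K (φ b))) '' X ∪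
      (fun b => (LinearMap.mulRight P b, LinearMap.mulRight K (φ b))) '' X)

lemma map_fst_mulOpPairs (φ : B →ₙₐ[F] V) (X : Set B) :
    (mulOpPairs P K φ X).map (NonUnitalAlgHom.fst F (Module.End P B) (Module.End K V)) =
      mulOps F P X := by
  simp [mulOpPairs, mulOps, NonUnitalAlgHom.map_adjoin, Set.image_union, Set.image_image]

lemma map_snd_mulOpPairs (φ : B →ₙₐ[F] V) (X : Set B) :
    (mulOpPairs P K φ X).map (NonUnitalAlgHom.snd F (Module.End P B) (Module.End K V)) =
      mulOps F K (φ '' X) := by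
  simp [mulOpPairs, mulOps, NonUnitalAlgHom.map_adjoin, Set.image_union, Set.image_image]

lemma snd_apply_of_mem_mulOpPairs {φ : B →ₙₐ[F] V} {X : Set B}
    {q : Module.End P B × Module.End K V} (hq : q ∈ mulOpPairs P K φ X) :
    ∀ x, q.2 (φ x) = φ (q.1 x) := by
  induction hq using NonUnitalAlgebra.adjoin_induction with
  | mem q hq => rcases hq with ⟨b, -, rfl⟩ | ⟨b, -, rfl⟩ <;> simp
  | add q r _ _ hq hr => simp [hq, hr]
  | zero => simp
  | mul q r _ _ hq hr => simp [hq, hr]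
  | smul c q _ hq => simp [hq]

lemma exists_mulOps_image {φ : B →ₙₐ[F] V} {X : Set B} {m : Module.End P B}
    (hm : m ∈ mulOps F P X) : ∃ n ∈ mulOps F K (φ '' X), ∀ x, n (φ x) = φ (m x) := by
  rw [← map_fst_mulOpPairs (K := K) φ] at hm
  obtain ⟨q, hq, rfl⟩ := hm
  rw [← map_snd_mulOpPairs (P := P) φ]
  exact ⟨q.2, ⟨q, hq, rfl⟩, snd_apply_of_mem_mulOpPairs hq⟩

lemma exists_mulOps_of_image {φ : B →ₙₐ[F] V} {X : Set B} {n : Module.End K V}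
    (hn : n ∈ mulOps F K (φ '' X)) : ∃ m ∈ mulOps F P X, ∀ x, n (φ x) = φ (m x) := by
  rw [← map_snd_mulOpPairs (P := P) φ] at hn
  obtain ⟨q, hq, rfl⟩ := hn
  rw [← map_fst_mulOpPairs (K := K) φ]
  exact ⟨q.1, ⟨q, hq, rfl⟩, snd_apply_of_mem_mulOpPairs hq⟩

end Functoriality

theorem satisfiesOrdinaryPI_multAlg_of_injective {F K B V : Type*} [Field F] [Field K]
    [Algebra F K] [NonUnitalNonAssocRing B] [Module F B] [SMulCommClass F B B]
    [IsScalarTower F B B] [NonUnitalNonAssocRing V] [Module F V] [Module K V]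
    [IsScalarTower F K V] [SMulCommClass K V V] [IsScalarTower K V V] [FiniteDimensional K V]
    (φ : B →ₙₐ[F] V) (hφ : Function.Injective φ) :
    SatisfiesOrdinaryPI F (MultAlg F (A := B) : Set (Module.End F B)) := by
  refine ⟨_, standardPoly_ne_zero F (Module.finrank K (Module.End K V) + 1), fun v hv => ?_⟩
  have h_extend : ∀ i, ∃ n : Module.End K V, ∀ x, n (φ x) = φ (v i x) := fun i => by
    obtain ⟨n, -, hn⟩ := exists_mulOps_image (K := K) (φ := φ) (multAlg_eq_mulOps F B ▸ hv i)
    exact ⟨n, hn⟩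
  choose w hw using h_extend
  have lift_apply (f : FreeAlgebra F ℕ) :
      ∀ x, FreeAlgebra.lift F w f (φ x) = φ (FreeAlgebra.lift F v f x) := by
    induction f using FreeAlgebra.induction with
    | grade0 r => simp
    | grade1 i => simp [hw]
    | mul a b ha hb => simp [ha, hb]
    | add a b ha hb => simp [ha, hb]
  ext x
  apply hφ
  rw [← lift_apply, lift_standardPoly_eq_zero (K := K) (Nat.lt_succ_self _)]
  simp

section LinearAlgebra

variable {F M N : Type*} [CommRing F] [AddCommGroup M] [Module F M] [AddCommGroup N] [Module F N]

lemma exists_linearMap_of_isInternal {ι : Type*} [DecidableEq ι] {ℳ : ι → Submodule F M}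
    (hℳ : DirectSum.IsInternal ℳ) (f : ∀ i, ℳ i →ₗ[F] N) :
    ∃ φ : M →ₗ[F] N, ∀ i (x : ℳ i), φ x = f i x := by
  let e := LinearEquiv.ofBijective (DirectSum.coeLinearMap ℳ) hℳ
  refine ⟨DirectSum.toModule F ι N f ∘ₗ e.symm.toLinearMap, fun i x => ?_⟩
  have he : e.symm x = DirectSum.lof F ι (fun i => ℳ i) i x :=
    e.symm_apply_eq.mpr (DirectSum.coeLinearMap_lof ℳ i x).symm
  simp [he]

lemma exists_linearMap_comp_eq_of_ker_le {L : Type*} [AddCommGroup L] [Module F L]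
    {p : L →ₗ[F] M} (hp : Function.Surjective p) {q : L →ₗ[F] N}
    (hpq : LinearMap.ker p ≤ LinearMap.ker q) : ∃ f : M →ₗ[F] N, ∀ x, f (p x) = q x :=
  ⟨(LinearMap.ker p).liftQ q hpq ∘ₗ (p.quotKerEquivOfSurjective hp).symm.toLinearMap,
    fun x => by simp⟩

end LinearAlgebra

section GradedSimple

variable {F G A : Type*} [Field F] [NonUnitalNonAssocRing A] [Module F A]

lemma isMulIdeal_iSup {ι κ : Type*} {𝒞 : κ → Submodule F A} (h𝒞 : ⨆ k, 𝒞 k = ⊤)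
    {I : ι → Submodule F A}
    (hI : ∀ k, ∀ c ∈ 𝒞 k, ∀ l, ∀ x ∈ I l, c * x ∈ ⨆ l, I l ∧ x * c ∈ ⨆ l, I l) :
    IsMulIdeal F (⨆ l, I l) := by
  have mul_mem_of_hom (k) (c) (hc : c ∈ 𝒞 k) (x) (hx : x ∈ ⨆ l, I l) :
      c * x ∈ ⨆ l, I l ∧ x * c ∈ ⨆ l, I l := by
    induction hx using Submodule.iSup_induction' with
    | mem l x hx => exact hI k c hc l x hx
    | zero => simp
    | add x y _ _ hx hy =>
      rw [mul_add, add_mul]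
      exact ⟨add_mem hx.1 hy.1, add_mem hx.2 hy.2⟩
  intro a x hx
  have ha : a ∈ ⨆ k, 𝒞 k := h𝒞 ▸ Submodule.mem_top
  induction ha using Submodule.iSup_induction' with
  | mem k c hc => exact mul_mem_of_hom k c hc x hx
  | zero => simp
  | add a b _ _ ha hb =>
    rw [mul_add, add_mul]
    exact ⟨add_mem ha.1 hb.1, add_mem ha.2 hb.2⟩

lemma IsGradedSimple.eq_of_le [CommGroup G] [DecidableEq G] {𝒜 : G → Submodule F A}
    (hsimp : IsGradedSimple F 𝒜) (hgr : IsAlgGrading F 𝒜)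
    {I : G → Submodule F A} (hI : I ≤ 𝒜) (hne : ∃ k, I k ≠ ⊥)
    (hmul : ∀ k, ∀ c ∈ 𝒜 k, ∀ l, ∀ x ∈ I l, c * x ∈ I (k * l) ∧ x * c ∈ I (k * l)) : I = 𝒜 := by
  have h_ideal : IsMulIdeal F (⨆ k, I k) :=
    isMulIdeal_iSup hgr.1.submodule_iSup_eq_top fun k c hc l x hx =>
      ⟨Submodule.mem_iSup_of_mem _ (hmul k c hc l x hx).1,
        Submodule.mem_iSup_of_mem _ (hmul k c hc l x hx).2⟩
  have h_homog : IsHomogSubmodule F 𝒜 (⨆ k, I k) :=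
    le_antisymm (iSup_mono fun k => le_inf (le_iSup I k) (hI k)) (iSup_le fun _ => inf_le_left)
  have h_ne_bot : ⨆ k, I k ≠ ⊥ := fun h => by
    obtain ⟨k, hk⟩ := hne
    exact hk (iSup_eq_bot.mp h k)
  exact (hgr.1.submodule_iSupIndep.le_iff_eq_of_iSup_eq_top
    ((hsimp.2 _ h_ideal h_homog).resolve_left h_ne_bot)).mp hI

variable [SMulCommClass F A A] [IsScalarTower F A A]

lemma mem_centroid_of_homogeneous {κ : Type*} {𝒞 : κ → Submodule F A} (h𝒞 : ⨆ k, 𝒞 k = ⊤)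
    {φ : Module.End F A}
    (hφ : ∀ k, ∀ c ∈ 𝒞 k, ∀ l, ∀ x ∈ 𝒞 l, φ (c * x) = c * φ x ∧ φ (x * c) = φ x * c) :
    φ ∈ centroid F (A := A) := by
  have comm_of_hom (k) (c) (hc : c ∈ 𝒞 k) (x : A) :
      φ (c * x) = c * φ x ∧ φ (x * c) = φ x * c := by
    have hx : x ∈ ⨆ l, 𝒞 l := h𝒞 ▸ Submodule.mem_top
    induction hx using Submodule.iSup_induction' with
    | mem l x hx => exact hφ k c hc l x hx
    | zero => simp
    | add x y _ _ hx hy => simp [mul_add, add_mul, hx, hy]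
  intro a x
  have ha : a ∈ ⨆ k, 𝒞 k := h𝒞 ▸ Submodule.mem_top
  induction ha using Submodule.iSup_induction' with
  | mem k c hc => exact comm_of_hom k c hc x
  | zero => simp
  | add a b _ _ ha hb => simp [mul_add, add_mul, ha, hb]

variable [CommGroup G] {𝒜 : G → Submodule F A}

variable (F A) in
/-- The unital multiplication algebra of `A`, generated by the identity and all left and right
multiplications. -/
def unitalMultAlg : Subalgebra F (Module.End F A) :=
  Algebra.adjoin F (Set.range (LinearMap.mulLeft F) ∪ Set.range (LinearMap.mulRight F))

variable (𝒜) in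
/-- The multiplication operators (including scalars) that are homogeneous of degree `h`. -/
def homogMulOps (h : G) : Submodule F (Module.End F A) :=
  (unitalMultAlg F A).toSubmodule ⊓ endGrading F 𝒜 h

lemma one_mem_homogMulOps : 1 ∈ homogMulOps 𝒜 1 :=
  ⟨one_mem (unitalMultAlg F A), fun g x hx => by simpa using hx⟩

lemma apply_mem_of_mem_homogMulOps {k g : G} {m : Module.End F A}
    (hm : m ∈ homogMulOps 𝒜 (k * g⁻¹)) {x : A} (hx : x ∈ 𝒜 g) : m x ∈ 𝒜 k := by
  simpa using hm.2 g x hx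

variable [DecidableEq G]

lemma mulLeft_mul_mem_homogMulOps (hgr : IsAlgGrading F 𝒜) {k h : G} {c : A} (hc : c ∈ 𝒜 k)
    {m : Module.End F A} (hm : m ∈ homogMulOps 𝒜 h) :
    LinearMap.mulLeft F c * m ∈ homogMulOps 𝒜 (k * h) := by
  refine ⟨(unitalMultAlg F A).mul_mem (Algebra.subset_adjoin (.inl ⟨c, rfl⟩)) hm.1,
    fun g x hx => ?_⟩
  rw [mul_assoc]
  exact hgr.2 _ _ c hc _ (hm.2 g x hx)

lemma mulRight_mul_mem_homogMulOps (hgr : IsAlgGrading F 𝒜) {k h : G} {c : A} (hc : c ∈ 𝒜 k)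
    {m : Module.End F A} (hm : m ∈ homogMulOps 𝒜 h) :
    LinearMap.mulRight F c * m ∈ homogMulOps 𝒜 (k * h) := by
  refine ⟨(unitalMultAlg F A).mul_mem (Algebra.subset_adjoin (.inr ⟨c, rfl⟩)) hm.1,
    fun g x hx => ?_⟩
  rw [mul_assoc, mul_comm k]
  exact hgr.2 _ _ _ (hm.2 g x hx) c hc

lemma exists_homogMulOps_apply_eq (hgr : IsAlgGrading F 𝒜) (hsimp : IsGradedSimple F 𝒜)
    {g k : G} {x y : A} (hx : x ∈ 𝒜 g) (hx0 : x ≠ 0) (hy : y ∈ 𝒜 k) :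
    ∃ m ∈ homogMulOps 𝒜 (k * g⁻¹), m x = y := by
  let I (l : G) : Submodule F A := (homogMulOps 𝒜 (l * g⁻¹)).map (LinearMap.applyₗ x)
  have hI : I ≤ 𝒜 := by
    rintro l _ ⟨m, hm, rfl⟩
    exact apply_mem_of_mem_homogMulOps hm hx
  have hne : I g ≠ ⊥ := by
    have hxI : x ∈ I g := ⟨1, by simpa using one_mem_homogMulOps, rfl⟩
    exact fun h => hx0 (by simpa [h] using hxI)
  have hmul (j) (c) (hc : c ∈ 𝒜 j) (l) (z) (hz : z ∈ I l) :
      c * z ∈ I (j * l) ∧ z * c ∈ I (j * l) := by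
    obtain ⟨m, hm, rfl⟩ := hz
    exact ⟨⟨_, mul_assoc j l g⁻¹ ▸ mulLeft_mul_mem_homogMulOps hgr hc hm, rfl⟩,
      ⟨_, mul_assoc j l g⁻¹ ▸ mulRight_mul_mem_homogMulOps hgr hc hm, rfl⟩⟩
  have hyI : y ∈ I k := by rwa [hsimp.eq_of_le hgr hI ⟨g, hne⟩ hmul]
  exact hyI

lemma exists_linearMap_apply_of_annihilator_le (hgr : IsAlgGrading F 𝒜)
    (hsimp : IsGradedSimple F 𝒜) {g k : G} {a b : A} (ha : a ∈ 𝒜 g) (ha0 : a ≠ 0)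
    (hab : ∀ h, ∀ m ∈ homogMulOps 𝒜 h, m a = 0 → m b = 0) :
    ∃ f : 𝒜 k →ₗ[F] A, ∀ m ∈ homogMulOps 𝒜 (k * g⁻¹), ∀ hm : m a ∈ 𝒜 k, f ⟨m a, hm⟩ = m b := by
  let D := homogMulOps 𝒜 (k * g⁻¹)
  let evalA : D →ₗ[F] 𝒜 k := ((LinearMap.applyₗ a).comp D.subtype).codRestrict (𝒜 k)
    fun m => apply_mem_of_mem_homogMulOps m.2 ha
  have evalA_surj : Function.Surjective evalA := fun y => by
    obtain ⟨m, hm, hma⟩ := exists_homogMulOps_apply_eq hgr hsimp ha ha0 y.2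
    exact ⟨⟨m, hm⟩, Subtype.ext hma⟩
  obtain ⟨f, hf⟩ := exists_linearMap_comp_eq_of_ker_le evalA_surj
    (q := (LinearMap.applyₗ b).comp D.subtype)
    fun m hm => hab _ m m.2 (congrArg Subtype.val hm)
  exact ⟨f, fun m hm _ => hf ⟨m, hm⟩⟩

/-- Schur's lemma: `m a ↦ m b` is a well-defined centroid element of degree `1`. -/
lemma exists_smul_eq_of_annihilator_le (hgr : IsAlgGrading F 𝒜) (hsimp : IsGradedSimple F 𝒜)
    (hcentral : ∀ φ ∈ centroid F (A := A) ⊓ endGrading F 𝒜 1, ∃ c : F, φ = c • 1)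
    {g : G} {a b : A} (ha : a ∈ 𝒜 g) (ha0 : a ≠ 0) (hb : b ∈ 𝒜 g)
    (hab : ∀ h, ∀ m ∈ homogMulOps 𝒜 h, m a = 0 → m b = 0) : ∃ c : F, b = c • a := by
  choose f hf using fun k => exists_linearMap_apply_of_annihilator_le (k := k) hgr hsimp ha ha0 hab
  obtain ⟨φ, hφ⟩ := exists_linearMap_of_isInternal hgr.1 f
  have φ_apply {h : G} {m : Module.End F A} (hm : m ∈ homogMulOps 𝒜 h) : φ (m a) = m b := by
    have hma : m a ∈ 𝒜 (h * g) := hm.2 g a ha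
    rw [hφ _ ⟨m a, hma⟩, hf (h * g) m (by simpa using hm)]
  have φ_centroid : φ ∈ centroid F (A := A) := by
    refine mem_centroid_of_homogeneous hgr.1.submodule_iSup_eq_top fun k c hc l x hx => ?_
    obtain ⟨m, hm, rfl⟩ := exists_homogMulOps_apply_eq hgr hsimp ha ha0 hx
    rw [φ_apply hm]
    exact ⟨φ_apply (mulLeft_mul_mem_homogMulOps hgr hc hm),
      φ_apply (mulRight_mul_mem_homogMulOps hgr hc hm)⟩
  have φ_degree_one : φ ∈ endGrading F 𝒜 1 := fun k x hx => by
    obtain ⟨m, hm, rfl⟩ := exists_homogMulOps_apply_eq hgr hsimp ha ha0 hx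
    rw [φ_apply hm, one_mul]
    exact apply_mem_of_mem_homogMulOps hm hb
  obtain ⟨c, hc⟩ := hcentral φ ⟨φ_centroid, φ_degree_one⟩
  have := φ_apply one_mem_homogMulOps
  exact ⟨c, by simpa [hc] using this.symm⟩

end GradedSimple

section BaseChange

variable {F K ι A : Type*} [Field F] [Field K] [Algebra F K]

section Module

variable [DecidableEq ι] [AddCommGroup A] [Module F A]

lemma equivFinsuppOfBasisLeft_baseChange_apply (β : Module.Basis ι F K) (m : Module.End F A)
    (x : K ⊗[F] A) (i : ι) :
    equivFinsuppOfBasisLeft β (m.baseChange K x) i = m (equivFinsuppOfBasisLeft β x i) := by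
  induction x with
  | zero => simp
  | tmul c a => simp
  | add x y hx hy => simp [hx, hy]

lemma equivFinsuppOfBasisLeft_apply_mem (β : Module.Basis ι F K) {N : Submodule F A}
    {x : K ⊗[F] A} (hx : x ∈ N.baseChange K) (i : ι) : equivFinsuppOfBasisLeft β x i ∈ N := by
  obtain ⟨y, rfl⟩ := hx
  induction y with
  | zero => simp
  | tmul c a => simpa using N.smul_mem _ a.2
  | add y z hy hz => simpa using add_mem hy hz

lemma one_tmul_mem_of_forall_eq_smul (β : Module.Basis ι F K)
    {J : Submodule K (K ⊗[F] A)} {x : K ⊗[F] A} (hx : x ∈ J) (hx0 : x ≠ 0) {a : A}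
    (ha : ∀ i, ∃ c : F, equivFinsuppOfBasisLeft β x i = c • a) : (1 : K) ⊗ₜ[F] a ∈ J := by
  choose c hc using ha
  let d : K := ∑ i ∈ (equivFinsuppOfBasisLeft β x).support, c i • β i
  have hxd : x = d • (1 : K) ⊗ₜ[F] a := by
    rw [← (equivFinsuppOfBasisLeft β).symm_apply_apply x, equivFinsuppOfBasisLeft_symm_apply,
      Finsupp.sum, Finset.sum_congr rfl fun i _ => by rw [hc i, tmul_smul, smul_tmul']]
    simp [d, sum_tmul, smul_tmul']
  have hd : d ≠ 0 := fun h => hx0 (by rw [hxd, h, zero_smul])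
  exact (J.smul_mem_iff hd).mp (hxd ▸ hx)

lemma baseChange_apply_mem_baseChange {N N' : Submodule F A} {m : Module.End F A}
    (hm : ∀ x ∈ N, m x ∈ N') {x : K ⊗[F] A} (hx : x ∈ N.baseChange K) :
    m.baseChange K x ∈ N'.baseChange K := by
  obtain ⟨y, rfl⟩ := hx
  induction y with
  | zero => simp
  | tmul c a => simpa using Submodule.tmul_mem_baseChange_of_mem c (hm a a.2)
  | add y z hy hz => simpa using add_mem hy hz

end Module

section Algebra

variable [NonUnitalNonAssocRing A] [Module F A] [SMulCommClass F A A] [IsScalarTower F A A]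
  {J : Submodule K (K ⊗[F] A)}

lemma baseChange_apply_mem_of_isMulIdeal (hJ : IsMulIdeal K J) {m : Module.End F A}
    (hm : m ∈ unitalMultAlg F A) : ∀ x ∈ J, m.baseChange K x ∈ J := by
  have baseChange_mulLeft (a : A) :
      (LinearMap.mulLeft F a).baseChange K = LinearMap.mulLeft K ((1 : K) ⊗ₜ[F] a) := by
    ext; simp
  have baseChange_mulRight (a : A) :
      (LinearMap.mulRight F a).baseChange K = LinearMap.mulRight K ((1 : K) ⊗ₜ[F] a) := by
    ext; simp
  induction hm using Algebra.adjoin_induction with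
  | mem m hm =>
    rcases hm with ⟨a, rfl⟩ | ⟨a, rfl⟩ <;> intro x hx
    · rw [baseChange_mulLeft]
      exact (hJ _ x hx).1
    · rw [baseChange_mulRight]
      exact (hJ _ x hx).2
  | algebraMap r =>
    intro x hx
    simpa [Algebra.algebraMap_eq_smul_one, LinearMap.baseChange_smul] using J.smul_of_tower_mem r hx
  | add m n _ _ hm hn => exact fun x hx => by simpa using add_mem (hm x hx) (hn x hx)
  | mul m n _ _ hm hn => exact fun x hx => by simpa [LinearMap.baseChange_mul] using hm _ (hn x hx)

variable {G : Type*} [CommGroup G] [DecidableEq G] {𝒜 : G → Submodule F A}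

/-- Applying multiplication operators shortens the expansion of an element of `J` in a basis of
`K` over `F` until all its coefficients are proportional. -/
lemma exists_one_tmul_mem_of_isMulIdeal (hgr : IsAlgGrading F 𝒜) (hsimp : IsGradedSimple F 𝒜)
    (hcentral : ∀ φ ∈ centroid F (A := A) ⊓ endGrading F 𝒜 1, ∃ c : F, φ = c • 1)
    (hJ : IsMulIdeal K J) (β : Module.Basis ι F K) {g : G} {x : K ⊗[F] A} (hx : x ∈ J)
    (hxg : x ∈ (𝒜 g).baseChange K) (hx0 : x ≠ 0) :
    ∃ k, ∃ a ∈ 𝒜 k, a ≠ 0 ∧ (1 : K) ⊗ₜ[F] a ∈ J := by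
  classical
  induction hn : (equivFinsuppOfBasisLeft β x).support.card using Nat.strong_induction_on
    generalizing x g with
  | _ n ih =>
    subst hn
    obtain ⟨i, hi⟩ : ∃ i, equivFinsuppOfBasisLeft β x i ≠ 0 := by
      by_contra! h
      exact hx0 ((equivFinsuppOfBasisLeft β).map_eq_zero_iff.mp (Finsupp.ext h))
    let a := equivFinsuppOfBasisLeft β x i
    have ha : a ∈ 𝒜 g := equivFinsuppOfBasisLeft_apply_mem β hxg i
    by_cases h_prop : ∀ j, ∃ c : F, equivFinsuppOfBasisLeft β x j = c • a
    · exact ⟨g, a, ha, hi, one_tmul_mem_of_forall_eq_smul β hx hx0 h_prop⟩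
    · obtain ⟨j, hj⟩ := not_forall.mp h_prop
      obtain ⟨h, m, hm, hma, hmj⟩ : ∃ h, ∃ m ∈ homogMulOps 𝒜 h, m a = 0 ∧
          m (equivFinsuppOfBasisLeft β x j) ≠ 0 := by
        by_contra! h_ann
        exact hj (exists_smul_eq_of_annihilator_le hgr hsimp hcentral ha hi
          (equivFinsuppOfBasisLeft_apply_mem β hxg j) h_ann)
      refine ih _ (Finset.card_lt_card ?_) (baseChange_apply_mem_of_isMulIdeal hJ hm.1 x hx)
        (baseChange_apply_mem_baseChange (hm.2 g) hxg) ?_ rfl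
      · refine Finset.ssubset_iff_of_subset (fun l hl => ?_) |>.mpr ⟨i, ?_, ?_⟩
        · rw [Finsupp.mem_support_iff, equivFinsuppOfBasisLeft_baseChange_apply] at hl
          exact Finsupp.mem_support_iff.mpr fun h0 => hl (by rw [h0, map_zero])
        · exact Finsupp.mem_support_iff.mpr hi
        · simpa [equivFinsuppOfBasisLeft_baseChange_apply] using hma
      · intro h0
        rw [← equivFinsuppOfBasisLeft_baseChange_apply, h0] at hmj
        simp at hmj

theorem IsGradedSimple.baseChange (hsimp : IsGradedSimple F 𝒜) (hgr : IsAlgGrading F 𝒜)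
    (hcentral : ∀ φ ∈ centroid F (A := A) ⊓ endGrading F 𝒜 1, ∃ c : F, φ = c • 1) :
    IsGradedSimple K fun g => (𝒜 g).baseChange K := by
  classical
  refine ⟨?_, fun J hJ h_homog => or_iff_not_imp_left.mpr fun hJ0 => ?_⟩
  · obtain ⟨a, b, hab⟩ := hsimp.1
    refine ⟨(1 : K) ⊗ₜ a, (1 : K) ⊗ₜ b, fun h => hab ?_⟩
    rw [Algebra.TensorProduct.tmul_mul_tmul, mul_one] at h
    exact (Module.FaithfullyFlat.one_tmul_eq_zero_iff _ _ _).mp h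
  obtain ⟨g, x, hx, hx0⟩ : ∃ g, ∃ x ∈ J ⊓ (𝒜 g).baseChange K, x ≠ 0 := by
    by_contra! h
    exact hJ0 (h_homog.trans (iSup_eq_bot.mpr fun g => (Submodule.eq_bot_iff _).mpr (h g)))
  obtain ⟨k, a, ha, ha0, haJ⟩ := exists_one_tmul_mem_of_isMulIdeal hgr hsimp hcentral hJ
    (Module.Basis.ofVectorSpace F K) hx.1 hx.2 hx0
  let N : Submodule F A := (J.restrictScalars F).comap (TensorProduct.mk F K A 1)
  have h𝒜N : (fun l => N ⊓ 𝒜 l) = 𝒜 := by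
    refine hsimp.eq_of_le hgr (fun _ => inf_le_right) ⟨k, fun h => ha0 ?_⟩ ?_
    · exact (Submodule.eq_bot_iff _).mp h a ⟨haJ, ha⟩
    · rintro j c hc l z ⟨hz, hzl⟩
      have := hJ (1 ⊗ₜ c) _ hz
      simp only [TensorProduct.mk_apply, Algebra.TensorProduct.tmul_mul_tmul, mul_one] at this
      exact ⟨⟨this.1, hgr.2 j l c hc z hzl⟩, ⟨this.2, mul_comm j l ▸ hgr.2 l j z hzl c hc⟩⟩
  have hN : N = ⊤ := eq_top_iff.mpr (hgr.1.submodule_iSup_eq_top.symm.le.trans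
    (iSup_le fun l => (congrFun h𝒜N l).symm.le.trans inf_le_left))
  rw [eq_top_iff, ← Submodule.baseChange_top, Submodule.baseChange_eq_span, ← hN]
  exact Submodule.span_le.mpr (Submodule.map_comap_le _ _)

end Algebra

end BaseChange

section TensorMap

variable {F P K A : Type*} [CommRing F] [CommRing P] [CommRing K] [Algebra F P] [Algebra F K]
  [NonUnitalNonAssocRing A] [Module F A] [SMulCommClass F A A] [IsScalarTower F A A]

variable (A) in
/-- The map `P ⊗ A → K ⊗ A` induced by a homomorphism `P → K` of commutative `F`-algebras. -/
def tensorMap (f : P →ₐ[F] K) : P ⊗[F] A →ₙₐ[F] K ⊗[F] A where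
  toFun := f.toLinearMap.rTensor A
  map_smul' := map_smul _
  map_zero' := map_zero _
  map_add' := map_add _
  map_mul' x y := by
    induction x with
    | zero => simp
    | add x x' hx hx' => simp [add_mul, hx, hx']
    | tmul p a =>
      induction y with
      | zero => simp
      | add y y' hy hy' => simp [mul_add, hy, hy']
      | tmul q b => simp

@[simp]
lemma tensorMap_tmul (f : P →ₐ[F] K) (p : P) (a : A) : tensorMap A f (p ⊗ₜ a) = f p ⊗ₜ a :=
  rfl

lemma tensorMap_smul (f : P →ₐ[F] K) (p : P) (x : P ⊗[F] A) :
    tensorMap A f (p • x) = f p • tensorMap A f x := by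
  induction x with
  | zero => simp
  | tmul q a => simp [smul_tmul']
  | add x y hx hy => simp [hx, hy]

lemma span_range_tensorMap (f : P →ₐ[F] K) :
    Submodule.span K (Set.range (tensorMap A f)) = ⊤ := by
  refine top_unique fun x _ => ?_
  induction x with
  | zero => exact zero_mem _
  | add x y hx hy => exact add_mem (hx trivial) (hy trivial)
  | tmul c a =>
    rw [← mul_one c, ← smul_eq_mul, ← smul_tmul', ← map_one f]
    exact Submodule.smul_mem _ c (Submodule.subset_span ⟨1 ⊗ₜ a, rfl⟩)

lemma tensorMap_injective [Module.Flat F A] {f : P →ₐ[F] K} (hf : Function.Injective f) :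
    Function.Injective (tensorMap A f) :=
  Module.Flat.rTensor_preserves_injective_linearMap f.toLinearMap hf

end TensorMap

section Descent

variable {F P K A : Type*} [Field F] [CommRing P] [CommRing K] [Algebra F P] [Algebra F K]
  [NonUnitalNonAssocRing A] [Module F A] [SMulCommClass F A A] [IsScalarTower F A A]

/-- A functional on `A` that is `1` at some vector recovers the scalar as an element of `P`. -/
lemma exists_eq_smul_of_tensorMap_eq_smul [Nontrivial A] {f : P →ₐ[F] K}
    (hf : Function.Injective f) {m : Module.End P (P ⊗[F] A)} {c : K}
    (hm : ∀ x, tensorMap A f (m x) = c • tensorMap A f x) :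
    ∃ p, f p = c ∧ ∀ x, m x = p • x := by
  obtain ⟨a, ha⟩ := exists_ne (0 : A)
  obtain ⟨ℓ, hℓ⟩ := Module.Projective.exists_dual_eq_one F ha
  have f_coord (y : P ⊗[F] A) : f (TensorProduct.rid F P (ℓ.lTensor P y)) =
      TensorProduct.rid F K (ℓ.lTensor K (tensorMap A f y)) := by
    induction y with
    | zero => simp
    | tmul p a => simp
    | add y z hy hz => simp [hy, hz]
  let p : P := TensorProduct.rid F P (ℓ.lTensor P (m (1 ⊗ₜ a)))
  have hp : f p = c := by simp [p, f_coord, hm, smul_tmul', hℓ]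
  refine ⟨p, hp, fun x => tensorMap_injective hf ?_⟩
  rw [hm, tensorMap_smul, hp]

end Descent

section Density

lemma exists_mem_aeval_ne_zero {F K σ : Type*} [CommRing F] [CommRing K] [IsDomain K] [Algebra F K]
    {W : AddSubmonoid (σ → K)} {C : Set K} (hC : C.Infinite) (hCW : ∀ c ∈ C, ∀ w ∈ W, c • w ∈ W)
    {t : σ → K} (ht : t ∈ Submodule.span K (W : Set (σ → K))) {p : MvPolynomial σ F}
    (hp : MvPolynomial.aeval t p ≠ 0) : ∃ w ∈ W, MvPolynomial.aeval w p ≠ 0 := by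
  by_contra! h_vanish
  obtain ⟨n, c, w, rfl⟩ := Submodule.mem_span_set'.mp ht
  let q : MvPolynomial (Fin n) K :=
    MvPolynomial.aeval (fun s => ∑ i, MvPolynomial.C ((w i : σ → K) s) * MvPolynomial.X i) p
  have eval_q (x : Fin n → K) :
      MvPolynomial.eval x q = MvPolynomial.aeval (∑ i, x i • (w i : σ → K)) p := by
    change (MvPolynomial.aeval x).restrictScalars F q = _
    rw [MvPolynomial.comp_aeval_apply]
    congr 2
    ext s
    simp [mul_comm]
  have hq : q = 0 := MvPolynomial.funext_set (fun _ => C) (fun _ => hC) fun x hx => by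
    rw [eval_q, map_zero]
    exact h_vanish _ (sum_mem fun i _ => hCW _ (hx i trivial) _ (w i).2)
  exact hp (by rw [← eval_q, hq, map_zero])

end Density

section Grading

variable {F K ι M : Type*} [CommRing F] [CommRing K] [Algebra F K] [AddCommGroup M] [Module F M]

lemma baseChange_eqOn {N : Submodule F M} {f g : M →ₗ[F] M} (h : Set.EqOn f g N) :
    Set.EqOn (f.baseChange K) (g.baseChange K) (N.baseChange K) := by
  rw [Submodule.baseChange_eq_span]
  refine LinearMap.eqOn_span ?_
  rintro _ ⟨x, hx, rfl⟩
  simp [h hx]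

lemma iSupIndep_baseChange [DecidableEq ι] {ℳ : ι → Submodule F M}
    (hℳ : DirectSum.IsInternal ℳ) : iSupIndep fun i => (ℳ i).baseChange K := by
  intro i
  obtain ⟨π, hπ⟩ := exists_linearMap_of_isInternal hℳ
    (fun j => if j = i then (ℳ j).subtype else 0)
  have π_self : Set.EqOn (π.baseChange K) id ((ℳ i).baseChange K) := by
    simpa using baseChange_eqOn (K := K) (g := LinearMap.id) fun x hx => by simp [hπ i ⟨x, hx⟩]
  have π_other : ⨆ j, ⨆ _ : j ≠ i, (ℳ j).baseChange K ≤ LinearMap.ker (π.baseChange K) :=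
    iSup₂_le fun j hj x hx => by
      simpa using baseChange_eqOn (g := 0) (fun y hy => by simp [hπ j ⟨y, hy⟩, hj]) hx
  exact Submodule.disjoint_def.mpr fun x hxi hx => (π_self hxi).symm.trans (π_other hx)

lemma iSup_baseChange_eq_top {ℳ : ι → Submodule F M} (hℳ : ⨆ i, ℳ i = ⊤) :
    ⨆ i, (ℳ i).baseChange K = ⊤ := by
  have one_tmul_mem : ⊤ ≤ ((⨆ i, (ℳ i).baseChange K).restrictScalars F).comap
      (TensorProduct.mk F K M 1) :=
    hℳ.ge.trans (iSup_le fun i x hx =>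
      Submodule.mem_iSup_of_mem i (Submodule.tmul_mem_baseChange_of_mem 1 hx))
  rw [eq_top_iff, ← Submodule.baseChange_top, Submodule.baseChange_eq_span, Submodule.span_le]
  exact Submodule.map_le_iff_le_comap.mpr one_tmul_mem

end Grading

section SpecElem

variable {F K G A : Type*} [Field F] [CommRing K] [Algebra F K] [AddCommGroup A] [Module F A]
  {𝒜 : G → Submodule F A} {nU : G → ℕ} (bU : ∀ g, Module.Basis (Fin (nU g)) F (𝒜 g))

/-- The element `y_i^g = ∑ j, τ_{ij}^g ⊗ u_j^g`, `k = (g, i)`, as a linear function of the matrix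
entries `τ`. Indeterminates in place of `τ` give the generic elements. -/
def specElem (k : Σ g, Fin (nU g)) : (G × ℕ × ℕ → K) →ₗ[K] K ⊗[F] A :=
  ∑ j : Fin (nU k.1), (LinearMap.proj (k.1, (k.2 : ℕ), (j : ℕ))).smulRight (1 ⊗ₜ (bU k.1 j : A))

lemma specElem_apply (k : Σ g, Fin (nU g)) (τ : G × ℕ × ℕ → K) :
    specElem bU k τ = ∑ j : Fin (nU k.1), τ (k.1, k.2, j) • (1 : K) ⊗ₜ[F] (bU k.1 j : A) := by
  simp [specElem]

lemma baseChange_component_eq_span (g : G) : (𝒜 g).baseChange K =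
    Submodule.span K (Set.range fun j => (1 : K) ⊗ₜ[F] (bU g j : A)) := by
  have h_span : 𝒜 g = Submodule.span F (Set.range fun j => (bU g j : A)) := by
    rw [Set.range_comp' Subtype.val (bU g), ← Submodule.coe_subtype, ← Submodule.map_span,
      (bU g).span_eq, Submodule.map_top, Submodule.range_subtype]
  conv_lhs => rw [h_span]
  rw [Submodule.baseChange_span, ← Set.range_comp]
  rfl

lemma specElem_mem (k : Σ g, Fin (nU g)) (τ : G × ℕ × ℕ → K) :
    specElem bU k τ ∈ (𝒜 k.1).baseChange K := by
  rw [specElem_apply]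
  exact sum_mem fun j _ =>
    Submodule.smul_mem _ _ (Submodule.tmul_mem_baseChange_of_mem 1 (bU k.1 j).2)

lemma exists_specElem_eq {v : (Σ g, Fin (nU g)) → K ⊗[F] A}
    (hv : ∀ k, v k ∈ (𝒜 k.1).baseChange K) : ∃ τ : G × ℕ × ℕ → K, ∀ k, specElem bU k τ = v k := by
  have exists_coeff (k) : ∃ c : Fin (nU k.1) → K, ∑ j, c j • (1 : K) ⊗ₜ[F] (bU k.1 j : A) = v k :=
    (Submodule.mem_span_range_iff_exists_fun K).mp
      ((baseChange_component_eq_span (K := K) bU k.1).le (hv k))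
  choose c hc using exists_coeff
  refine ⟨fun x => if h : x.2.1 < nU x.1 ∧ x.2.2 < nU x.1 then
    c ⟨x.1, x.2.1, h.1⟩ ⟨x.2.2, h.2⟩ else 0, fun k => ?_⟩
  simp [specElem_apply, ← hc]

end SpecElem

section SpecAlg

variable {F K G A : Type*} [Field F] [CommRing K] [Algebra F K] [NonUnitalNonAssocRing A]
  [Module F A] [SMulCommClass F A A] [IsScalarTower F A A] {𝒜 : G → Submodule F A} {nU : G → ℕ}
  (bU : ∀ g, Module.Basis (Fin (nU g)) F (𝒜 g))

/-- The specialization at `τ` of the algebra of generic elements. -/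
def specAlg (τ : G × ℕ × ℕ → K) : NonUnitalSubalgebra F (K ⊗[F] A) :=
  NonUnitalAlgebra.adjoin F (Set.range fun k => specElem bU k τ)

lemma specElem_mem_specAlg (k : Σ g, Fin (nU g)) (τ : G × ℕ × ℕ → K) :
    specElem bU k τ ∈ specAlg bU τ :=
  NonUnitalAlgebra.subset_adjoin F ⟨k, rfl⟩

lemma tensorMap_specElem {P : Type*} [CommRing P] [Algebra F P] (f : P →ₐ[F] K)
    (k : Σ g, Fin (nU g)) (τ : G × ℕ × ℕ → P) :
    tensorMap A f (specElem bU k τ) = specElem bU k (f ∘ τ) := by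
  simp [specElem_apply, tensorMap_smul]

lemma map_specAlg {P : Type*} [CommRing P] [Algebra F P] (f : P →ₐ[F] K) (τ : G × ℕ × ℕ → P) :
    (specAlg bU τ).map (tensorMap A f) = specAlg bU (f ∘ τ) := by
  simp only [specAlg, NonUnitalAlgHom.map_adjoin, ← Set.range_comp', tensorMap_specElem]

lemma specAlg_zero : specAlg bU (0 : G × ℕ × ℕ → K) = ⊥ := by
  rw [specAlg, eq_bot_iff]
  refine NonUnitalAlgebra.adjoin_le ?_
  rintro _ ⟨k, rfl⟩
  simp

/-- The generic algebra is the image of a subalgebra of `F[T] ⊗ A`, whose multiplication operators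
map to those of every specialization. -/
lemma exists_mvPolynomial_of_mem_scalarMulOps [Nontrivial A] {t : G × ℕ × ℕ → K}
    (ht : AlgebraicIndependent F t) {c : K}
    (hc : c ∈ scalarMulOps F K (specAlg bU t : Set (K ⊗[F] A))) :
    ∃ p : MvPolynomial (G × ℕ × ℕ) F, MvPolynomial.aeval t p = c ∧
      ∀ τ : G × ℕ × ℕ → K,
        MvPolynomial.aeval τ p ∈ scalarMulOps F K (specAlg bU τ : Set (K ⊗[F] A)) := by
  have image_specAlg (τ : G × ℕ × ℕ → K) : tensorMap A (MvPolynomial.aeval (R := F) τ) ''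
      (specAlg bU (MvPolynomial.X (R := F)) : Set (MvPolynomial (G × ℕ × ℕ) F ⊗[F] A)) =
        (specAlg bU τ : Set (K ⊗[F] A)) := by
    rw [← NonUnitalSubalgebra.coe_map, map_specAlg]
    congr 2
    ext
    simp
  rw [mem_scalarMulOps, ← image_specAlg] at hc
  obtain ⟨m, hm, hcm⟩ := exists_mulOps_of_image (P := MvPolynomial (G × ℕ × ℕ) F) hc
  obtain ⟨p, hp, hpm⟩ := exists_eq_smul_of_tensorMap_eq_smul ht
    (fun x => (hcm x).symm)
  refine ⟨p, hp, fun τ => ?_⟩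
  obtain ⟨n, hn, hnm⟩ := exists_mulOps_image (K := K)
    (φ := tensorMap A (MvPolynomial.aeval (R := F) τ)) hm
  have hnp : n = MvPolynomial.aeval τ p • 1 := by
    refine LinearMap.ext_on_range (span_range_tensorMap (MvPolynomial.aeval τ)) fun x => ?_
    rw [hnm, hpm, tensorMap_smul]
    rfl
  rw [mem_scalarMulOps, ← hnp, ← image_specAlg]
  exact hn

end SpecAlg

section GenericSpan

variable {F K G A : Type*} [Field F] [Field K] [Algebra F K] [AddCommGroup A] [Module F A]
  {𝒜 : G → Submodule F A} {nU : G → ℕ} (bU : ∀ g, Module.Basis (Fin (nU g)) F (𝒜 g))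

lemma one_tmul_mem_span_specElem {t : G × ℕ × ℕ → K} (ht : AlgebraicIndependent F t)
    (g : G) (j : Fin (nU g)) : (1 : K) ⊗ₜ[F] (bU g j : A) ∈
      Submodule.span K (Set.range fun i => specElem bU ⟨g, i⟩ t) := by
  let M : Matrix (Fin (nU g)) (Fin (nU g)) K := fun i j => t (g, i, j)
  have hM : IsUnit M.det := by
    have h_ind : AlgebraicIndependent F fun ij : Fin (nU g) × Fin (nU g) => t (g, ij.1, ij.2) :=
      ht.comp (fun ij : Fin (nU g) × Fin (nU g) => (g, (ij.1 : ℕ), (ij.2 : ℕ)))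
        fun x y h => by simpa [Prod.ext_iff, Fin.ext_iff] using h
    have hMX : M = (MvPolynomial.aeval fun ij : Fin (nU g) × Fin (nU g) =>
        t (g, ij.1, ij.2)).mapMatrix (Matrix.mvPolynomialX (Fin (nU g)) (Fin (nU g)) F) := by
      ext; simp [M]
    rw [hMX, ← AlgHom.map_det, isUnit_iff_ne_zero, map_ne_zero_iff _ h_ind]
    exact Matrix.det_mvPolynomialX_ne_zero _ F
  have h_inv : ∑ i, M⁻¹ j i • specElem bU ⟨g, i⟩ t = (1 : K) ⊗ₜ[F] (bU g j : A) := by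
    calc ∑ i, M⁻¹ j i • specElem bU ⟨g, i⟩ t
      _ = ∑ l, (M⁻¹ * M) j l • (1 : K) ⊗ₜ[F] (bU g l : A) := by
        simp only [specElem_apply, Finset.smul_sum, smul_smul, Matrix.mul_apply, Finset.sum_smul]
        rw [Finset.sum_comm]
      _ = (1 : K) ⊗ₜ[F] (bU g j : A) := by
        rw [Matrix.nonsing_inv_mul _ hM]
        simp [Matrix.one_apply]
  rw [← h_inv]
  exact Submodule.sum_mem _ fun i _ => Submodule.smul_mem _ _ (Submodule.subset_span ⟨i, rfl⟩)

lemma mem_span_setOf_specElem_mem [Finite (Σ g, Fin (nU g))] {N : AddSubgroup (K ⊗[F] A)}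
    (hN : ∀ g, (𝒜 g).baseChange K ≤
      Submodule.span K ((N : Set (K ⊗[F] A)) ∩ (𝒜 g).baseChange K))
    (τ : G × ℕ × ℕ → K) :
    τ ∈ Submodule.span K {τ : G × ℕ × ℕ → K | ∀ k, specElem bU k τ ∈ N} := by
  classical
  have := Fintype.ofFinite (Σ g, Fin (nU g))
  set W := {τ : G × ℕ × ℕ → K | ∀ k, specElem bU k τ ∈ N}
  let Φ : (G × ℕ × ℕ → K) →ₗ[K] (Σ g, Fin (nU g)) → K ⊗[F] A := LinearMap.pi (specElem bU)
  have ker_le : LinearMap.ker Φ ≤ Submodule.span K W := fun σ hσ =>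
    Submodule.subset_span fun k => by
      rw [show specElem bU k σ = 0 from congrFun hσ k]
      exact N.zero_mem
  have single_mem (k) (x) (hx : x ∈ (𝒜 k.1).baseChange K) :
      Pi.single k x ∈ (Submodule.span K W).map Φ := by
    refine (Submodule.span_le (p := ((Submodule.span K W).map Φ).comap
      (LinearMap.single K (fun _ => K ⊗[F] A) k))).mpr ?_ (hN k.1 hx)
    rintro y ⟨hyN, hyk⟩
    obtain ⟨σ, hσ⟩ := exists_specElem_eq bU (v := Pi.single k y) fun l => by
      rcases eq_or_ne l k with rfl | hl
      · simpa using hyk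
      · simp [hl]
    refine ⟨σ, Submodule.subset_span fun l => ?_, funext hσ⟩
    rw [hσ]
    rcases eq_or_ne l k with rfl | hl
    · simpa using hyN
    · simp [hl]
  have Φ_mem : Φ τ ∈ (Submodule.span K W).map Φ := by
    rw [← Finset.univ_sum_single (Φ τ)]
    exact sum_mem fun k _ => single_mem k _ (specElem_mem bU k τ)
  rwa [← Submodule.mem_comap, Submodule.comap_map_eq, sup_eq_left.mpr ker_le] at Φ_mem

end GenericSpan

section Span

variable {K V : Type*} [Field K] [NonUnitalNonAssocRing V] [Module K V] [SMulCommClass K V V]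
  [IsScalarTower K V V]

lemma isMulIdeal_span {S I : Set V} (hS : Submodule.span K S = ⊤)
    (hI : ∀ a ∈ S, ∀ x ∈ I, a * x ∈ I ∧ x * a ∈ I) : IsMulIdeal K (Submodule.span K I) := by
  have mul_left_le : Submodule.map₂ (LinearMap.mul K V) ⊤ (Submodule.span K I) ≤
      Submodule.span K I := by
    rw [← hS, Submodule.map₂_span_span]
    exact Submodule.span_mono (Set.image2_subset_iff.mpr fun a ha x hx => (hI a ha x hx).1)
  have mul_right_le : Submodule.map₂ (LinearMap.mul K V) (Submodule.span K I) ⊤ ≤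
      Submodule.span K I := by
    rw [← hS, Submodule.map₂_span_span]
    exact Submodule.span_mono (Set.image2_subset_iff.mpr fun x hx a ha => (hI a ha x hx).2)
  exact fun a x hx => ⟨mul_left_le (Submodule.apply_mem_map₂ _ trivial hx),
    mul_right_le (Submodule.apply_mem_map₂ _ hx trivial)⟩

lemma exists_mul_ne_zero_of_span_eq_top {S : Set V} (hS : Submodule.span K S = ⊤)
    (hV : ∃ a b : V, a * b ≠ 0) : ∃ a ∈ S, ∃ b ∈ S, a * b ≠ 0 := by
  contrapose! hV
  have mul_eq_zero : LinearMap.mul K V = 0 :=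
    LinearMap.ext_on hS fun a ha => LinearMap.ext_on hS fun b hb => hV a ha b hb
  exact fun a b => LinearMap.congr_fun₂ mul_eq_zero a b

end Span

section HomogeneousSpan

variable {F K V G : Type*} [CommRing F] [CommRing K] [Algebra F K] [AddCommGroup V] [Module F V]
  [Module K V] [IsScalarTower F K V] {𝒱 : G → Submodule K V} {I : Submodule F V}

lemma span_le_iSup_span_inter (hI : I = ⨆ g, I ⊓ (𝒱 g).restrictScalars F) :
    Submodule.span K (I : Set V) ≤ ⨆ g, Submodule.span K ((I : Set V) ∩ 𝒱 g) := by
  have h_le : I ≤ (⨆ g, Submodule.span K ((I : Set V) ∩ 𝒱 g)).restrictScalars F := by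
    conv_lhs => rw [hI]
    exact iSup_le fun g x hx => Submodule.mem_iSup_of_mem g (Submodule.subset_span hx)
  exact Submodule.span_le.mpr h_le

lemma span_inter_le (S : Set V) (N : Submodule K V) :
    Submodule.span K (S ∩ N) ≤ Submodule.span K S ⊓ N :=
  le_inf (Submodule.span_mono Set.inter_subset_left)
    (Submodule.span_le.mpr Set.inter_subset_right)

lemma eq_iSup_span_inf (hI : I = ⨆ g, I ⊓ (𝒱 g).restrictScalars F) :
    Submodule.span K (I : Set V) = ⨆ g, Submodule.span K (I : Set V) ⊓ 𝒱 g :=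
  le_antisymm ((span_le_iSup_span_inter hI).trans (iSup_mono fun g => span_inter_le _ (𝒱 g)))
    (iSup_le fun _ => inf_le_left)

lemma span_inter_eq_of_span_eq_top (h𝒱 : iSupIndep 𝒱)
    (hI : I = ⨆ g, I ⊓ (𝒱 g).restrictScalars F) (h_top : Submodule.span K (I : Set V) = ⊤) (g : G) :
    Submodule.span K ((I : Set V) ∩ 𝒱 g) = 𝒱 g := by
  have h_le : (fun g => Submodule.span K ((I : Set V) ∩ 𝒱 g)) ≤ 𝒱 :=
    fun g => (span_inter_le _ (𝒱 g)).trans inf_le_right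
  have h_iSup : ⨆ g, Submodule.span K ((I : Set V) ∩ 𝒱 g) = ⊤ :=
    top_unique (h_top.ge.trans (span_le_iSup_span_inter hI))
  exact congrFun ((h𝒱.le_iff_eq_of_iSup_eq_top h_iSup).mp h_le) g

end HomogeneousSpan

section CentralLocalization

variable {F K V : Type*} [Field F] [Field K] [Algebra F K]
  [NonUnitalNonAssocRing V] [Module F V] [Module K V] [IsScalarTower F K V]
  [SMulCommClass K V V] [IsScalarTower K V V]

lemma smul_mem_of_mem_scalarMulOps {S : Set V} {I : Submodule F V}
    (hI : ∀ a ∈ S, ∀ x ∈ I, a * x ∈ I ∧ x * a ∈ I) {c : K} (hc : c ∈ scalarMulOps F K S)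
    {x : V} (hx : x ∈ I) : c • x ∈ I :=
  apply_mem_of_mem_mulOps le_rfl hI (mem_scalarMulOps.mp hc) x hx

lemma smul_mem_of_mem_scalarMulOps_self {R : NonUnitalSubalgebra F V} {c : K}
    (hc : c ∈ scalarMulOps F K (R : Set V)) {x : V} (hx : x ∈ R) : c • x ∈ R :=
  smul_mem_of_mem_scalarMulOps (I := R.toSubmodule)
    (fun _ ha _ hx => ⟨R.mul_mem ha hx, R.mul_mem hx ha⟩) hc hx

lemma scalarMulOps_singleton_zero [Nontrivial V] : scalarMulOps F K ({0} : Set V) = ⊥ := by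
  obtain ⟨x, hx⟩ := exists_ne (0 : V)
  refine eq_bot_iff.mpr fun c hc => NonUnitalAlgebra.mem_bot.mpr ?_
  have hcx : c • x ∈ (⊥ : Submodule F V) := apply_mem_of_mem_mulOps (N := ⊤) bot_le
    (fun a ha y _ => by simp [Set.mem_singleton_iff.mp ha]) (mem_scalarMulOps.mp hc) x trivial
  exact (smul_eq_zero.mp hcx).resolve_right hx

variable (K) in
/-- `L` is the central localization of `R`: the subalgebra of the fractions `c⁻¹ • x` with `x ∈ R`
and `c ≠ 0` a scalar in the multiplication algebra of `R`. -/
def IsCentralLocalization (R L : NonUnitalSubalgebra F V) : Prop :=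
  ∀ y, y ∈ L ↔ ∃ c ∈ scalarMulOps F K (R : Set V), c ≠ 0 ∧ ∃ x ∈ R, y = c⁻¹ • x

namespace IsCentralLocalization

variable {R L : NonUnitalSubalgebra F V}

lemma exists_ne_zero (h : IsCentralLocalization K R L) :
    ∃ c ∈ scalarMulOps F K (R : Set V), c ≠ 0 :=
  let ⟨c, hc, hc0, _⟩ := (h 0).mp L.zero_mem
  ⟨c, hc, hc0⟩

lemma le (h : IsCentralLocalization K R L) : R ≤ L := fun x hx =>
  let ⟨c, hc, hc0⟩ := h.exists_ne_zero
  (h x).mpr ⟨c, hc, hc0, c • x, smul_mem_of_mem_scalarMulOps_self hc hx,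
    (inv_smul_smul₀ hc0 x).symm⟩

lemma inv_smul_mem (h : IsCentralLocalization K R L) {c : K}
    (hc : c ∈ scalarMulOps F K (R : Set V)) (hc0 : c ≠ 0) {y : V} (hy : y ∈ L) :
    c⁻¹ • y ∈ L := by
  obtain ⟨d, hd, hd0, x, hx, rfl⟩ := (h y).mp hy
  exact (h _).mpr ⟨d * c, mul_mem hd hc, mul_ne_zero hd0 hc0, x, hx, by
    rw [smul_smul, mul_inv_rev]⟩

lemma exists_smul_mem (h : IsCentralLocalization K R L) {y : V} (hy : y ∈ L) :
    ∃ c ∈ scalarMulOps F K (R : Set V), c ≠ 0 ∧ c • y ∈ R := by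
  obtain ⟨c, hc, hc0, x, hx, rfl⟩ := (h y).mp hy
  exact ⟨c, hc, hc0, by rwa [smul_inv_smul₀ hc0]⟩

lemma span_inter_le_span_inf_inter (h : IsCentralLocalization K R L) {I : Submodule F V}
    (hIL : I ≤ L.toSubmodule) (hI : ∀ a ∈ L, ∀ x ∈ I, a * x ∈ I ∧ x * a ∈ I)
    (N : Submodule K V) : Submodule.span K ((I : Set V) ∩ N) ≤
      Submodule.span K (((I ⊓ R.toSubmodule : Submodule F V) : Set V) ∩ N) := by
  refine Submodule.span_le.mpr fun y ⟨hyI, hyN⟩ => ?_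
  obtain ⟨c, hc, hc0, hcy⟩ := h.exists_smul_mem (hIL hyI)
  have hcI : c • y ∈ I := smul_mem_of_mem_scalarMulOps (fun a ha => hI a (h.le ha)) hc hyI
  rw [← inv_smul_smul₀ hc0 y]
  exact Submodule.smul_mem _ _ (Submodule.subset_span ⟨⟨hcI, hcy⟩, N.smul_mem c hyN⟩)

lemma eq_of_mem_scalarMulOps (h : IsCentralLocalization K R L) {I : Submodule F V}
    (hIL : I ≤ L.toSubmodule) (hI : ∀ a ∈ L, ∀ x ∈ I, a * x ∈ I ∧ x * a ∈ I) {d : K}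
    (hd0 : d ≠ 0) (hd : d ∈ scalarMulOps F K ((I : Set V) ∩ R)) : I = L.toSubmodule := by
  have mul_mem (a) (ha : a ∈ (I : Set V) ∩ R) (x) (hx : x ∈ L.toSubmodule) :
      a * x ∈ I ∧ x * a ∈ I := (hI x hx a ha.1).symm
  have hdR : d ∈ scalarMulOps F K (R : Set V) :=
    mem_scalarMulOps.mpr (mulOps_mono Set.inter_subset_right (mem_scalarMulOps.mp hd))
  refine le_antisymm hIL fun x hx => ?_
  rw [← smul_inv_smul₀ hd0 x]
  exact apply_mem_of_mem_mulOps hIL mul_mem (mem_scalarMulOps.mp hd) _ (h.inv_smul_mem hdR hd0 hx)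

end IsCentralLocalization

section MultAlg

variable [SMulCommClass F V V] [IsScalarTower F V V] {R : NonUnitalSubalgebra F V}

lemma exists_end_extending_of_mem_multAlg {m : Module.End F R} (hm : m ∈ MultAlg F (A := R)) :
    ∃ n ∈ mulOps F K (R : Set V), ∀ x : R, n x = m x := by
  have := exists_mulOps_image (K := K) (φ := NonUnitalSubalgebraClass.subtype R)
    (multAlg_eq_mulOps F R ▸ hm)
  simpa using this

lemma exists_mem_multAlg_of_mem_scalarMulOps {c : K} (hc : c ∈ scalarMulOps F K (R : Set V)) :
    ∃ s ∈ MultAlg F (A := R), ∀ x : R, (s x : V) = c • (x : V) := by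
  rw [mem_scalarMulOps, show (R : Set V) = NonUnitalSubalgebraClass.subtype R '' Set.univ by simp]
    at hc
  obtain ⟨s, hs, hsc⟩ := exists_mulOps_of_image (P := F) hc
  exact ⟨s, multAlg_eq_mulOps F R ▸ hs, fun x => (hsc x).symm⟩

lemma mem_scalarMulOps_of_mem_multAlg (hR : Submodule.span K (R : Set V) = ⊤)
    {s : Module.End F R} (hs : s ∈ MultAlg F (A := R)) {c : K}
    (hc : ∀ x : R, (s x : V) = c • (x : V)) : c ∈ scalarMulOps F K (R : Set V) := by
  obtain ⟨n, hn, hns⟩ := exists_end_extending_of_mem_multAlg (K := K) hs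
  have hnc : n = c • 1 := LinearMap.ext_on hR fun x hx => (hns ⟨x, hx⟩).trans (hc ⟨x, hx⟩)
  rwa [mem_scalarMulOps, ← hnc]

lemma mul_comm_of_apply_eq_smul {s m : Module.End F R} {c : K}
    (hs : ∀ x : R, (s x : V) = c • (x : V)) (hm : m ∈ MultAlg F (A := R)) : s * m = m * s := by
  obtain ⟨n, -, hnm⟩ := exists_end_extending_of_mem_multAlg (K := K) hm
  ext x
  calc (s (m x) : V)
    _ = c • n x := by rw [hs, hnm]
    _ = n (s x) := by rw [hs, map_smul]
    _ = m (s x) := hnm (s x)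

variable (K R) in
theorem satisfiesOrdinaryPI_multAlg [FiniteDimensional K V] :
    SatisfiesOrdinaryPI F (MultAlg F (A := R) : Set (Module.End F R)) :=
  satisfiesOrdinaryPI_multAlg_of_injective (K := K) (NonUnitalSubalgebraClass.subtype R)
    Subtype.val_injective

end MultAlg

end CentralLocalization

section CenterMultE

variable {F K G A : Type*} [Field F] [CommGroup G] [Field K] [Algebra F K]
  [NonUnitalNonAssocRing A] [Module F A] [SMulCommClass F A A] [IsScalarTower F A A]
  {𝒜 : G → Submodule F A} {R L : NonUnitalSubalgebra F (K ⊗[F] A)}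

lemma exists_mem_centerMultE {c : K} (hc : c ∈ scalarMulOps F K (R : Set (K ⊗[F] A))) :
    ∃ s ∈ centerMultE F K 𝒜 R, ∀ x : R, (s x : K ⊗[F] A) = c • (x : K ⊗[F] A) := by
  obtain ⟨s, hs, hsc⟩ := exists_mem_multAlg_of_mem_scalarMulOps hc
  have s_mem_one : s ∈ endGrading F (subComp F K 𝒜 R) 1 := fun g x hx => by
    have hcx : c • (x : K ⊗[F] A) ∈ (𝒜 g).baseChange K := Submodule.smul_mem _ c hx
    rw [one_mul]
    change (s x : K ⊗[F] A) ∈ (𝒜 g).baseChange K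
    rwa [hsc]
  exact ⟨s, ⟨hs, fun m hm => mul_comm_of_apply_eq_smul hsc hm, s_mem_one⟩, hsc⟩

lemma isCentralLocalization_of_centerMultE [Nontrivial (K ⊗[F] A)]
    (hR : Submodule.span K (R : Set (K ⊗[F] A)) = ⊤) {θ : Module.End F R → K}
    (hθ : ∀ s ∈ centerMultE F K 𝒜 R, ∀ x : R, (s x : K ⊗[F] A) = θ s • (x : K ⊗[F] A))
    (hL : (L : Set (K ⊗[F] A)) =
      {y | ∃ s ∈ centerMultE F K 𝒜 R, s ≠ 0 ∧ ∃ x ∈ R, y = (θ s)⁻¹ • x}) :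
    IsCentralLocalization K R L := by
  obtain ⟨z, hzR, hz0⟩ : ∃ z ∈ R, z ≠ 0 := by
    by_contra! hR0
    have : (⊤ : Submodule K (K ⊗[F] A)) = ⊥ := hR ▸ Submodule.span_eq_bot.mpr hR0
    exact top_ne_bot this
  intro y
  rw [← SetLike.mem_coe, hL]
  constructor
  · rintro ⟨s, hs, hs0, x, hx, rfl⟩
    refine ⟨θ s, mem_scalarMulOps_of_mem_multAlg hR hs.1 (hθ s hs), fun hθ0 => hs0 ?_, x, hx, rfl⟩
    ext x
    simp [hθ s hs, hθ0]
  · rintro ⟨c, hc, hc0, x, hx, rfl⟩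
    obtain ⟨s, hs, hsc⟩ := exists_mem_centerMultE (𝒜 := 𝒜) hc
    have hθs : θ s = c := smul_left_injective K hz0 ((hθ s hs ⟨z, hzR⟩).symm.trans (hsc ⟨z, hzR⟩))
    refine ⟨s, hs, fun hs0 => smul_ne_zero hc0 hz0 ?_, x, hx, by rw [hθs]⟩
    rw [← hsc ⟨z, hzR⟩, hs0]
    rfl

end CenterMultE

section GenericAlg

variable {F K G A : Type*} [Field F] [Field K] [Algebra F K] [NonUnitalNonAssocRing A]
  [Module F A] [SMulCommClass F A A] [IsScalarTower F A A] {𝒜 : G → Submodule F A} {nU : G → ℕ}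
  {bU : ∀ g, Module.Basis (Fin (nU g)) F (𝒜 g)} {t : G × ℕ × ℕ → K}

lemma span_specAlg_eq_top (h𝒜 : ⨆ g, 𝒜 g = ⊤) (ht : AlgebraicIndependent F t) :
    Submodule.span K (specAlg bU t : Set (K ⊗[F] A)) = ⊤ := by
  refine top_unique ((iSup_baseChange_eq_top h𝒜).ge.trans (iSup_le fun g => ?_))
  rw [baseChange_component_eq_span bU g, Submodule.span_le]
  rintro _ ⟨j, rfl⟩
  refine Submodule.span_mono ?_ (one_tmul_mem_span_specElem bU ht g j)
  rintro _ ⟨i, rfl⟩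
  exact specElem_mem_specAlg bU ⟨g, i⟩ t

/-- The polynomial behind a nonzero scalar vanishes at `τ = 0`, so it is not constant, and its
powers give infinitely many scalars. -/
lemma scalarMulOps_specAlg_infinite [Nontrivial A] (ht : AlgebraicIndependent F t) {c : K}
    (hc : c ∈ scalarMulOps F K (specAlg bU t : Set (K ⊗[F] A))) (hc0 : c ≠ 0) :
    (scalarMulOps F K (specAlg bU t : Set (K ⊗[F] A)) : Set K).Infinite := by
  obtain ⟨p, rfl, hp⟩ := exists_mvPolynomial_of_mem_scalarMulOps bU ht hc
  have aeval_zero : MvPolynomial.aeval (0 : G × ℕ × ℕ → K) p = 0 := by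
    have h_mem := hp 0
    rwa [specAlg_zero, NonUnitalAlgebra.coe_bot, scalarMulOps_singleton_zero,
      NonUnitalAlgebra.mem_bot] at h_mem
  have hp_unit : ¬ IsUnit p := fun h =>
    (h.map (MvPolynomial.aeval (0 : G × ℕ × ℕ → K))).ne_zero aeval_zero
  have hp0 : p ≠ 0 := by
    rintro rfl
    exact hc0 (map_zero _)
  have pow_mem (n : ℕ) : MvPolynomial.aeval t p ^ (n + 1) ∈
      scalarMulOps F K (specAlg bU t : Set (K ⊗[F] A)) := by
    induction n with
    | zero => simpa using hc
    | succ n ih => exact pow_succ (MvPolynomial.aeval t p) _ ▸ mul_mem ih hc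
  refine Set.infinite_of_injective_forall_mem (f := fun n : ℕ => MvPolynomial.aeval t p ^ (n + 1))
    (fun m n hmn => ?_) pow_mem
  simp only [← map_pow] at hmn
  exact Nat.succ_injective (pow_injective_of_not_isUnit hp_unit hp0 (ht hmn))

lemma exists_ne_zero_mem_scalarMulOps_inter [Nontrivial A] [Finite (Σ g, Fin (nU g))]
    (ht : AlgebraicIndependent F t) {c : K}
    (hc : c ∈ scalarMulOps F K (specAlg bU t : Set (K ⊗[F] A))) (hc0 : c ≠ 0)
    {I : Submodule F (K ⊗[F] A)}
    (hI : ∀ a ∈ specAlg bU t, ∀ x ∈ I, a * x ∈ I ∧ x * a ∈ I)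
    (h_span : ∀ g, (𝒜 g).baseChange K ≤ Submodule.span K
      (((I ⊓ (specAlg bU t).toSubmodule : Submodule F (K ⊗[F] A)) : Set (K ⊗[F] A)) ∩
        (𝒜 g).baseChange K)) :
    ∃ d : K, d ≠ 0 ∧ d ∈ scalarMulOps F K ((I : Set (K ⊗[F] A)) ∩ specAlg bU t) := by
  let N : NonUnitalSubalgebra F (K ⊗[F] A) :=
    { I ⊓ (specAlg bU t).toSubmodule with
      mul_mem' := fun {a b} ha hb => ⟨(hI a ha.2 b hb.1).1, (specAlg bU t).mul_mem ha.2 hb.2⟩ }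
  let W : AddSubmonoid (G × ℕ × ℕ → K) := ⨅ k, N.toAddSubmonoid.comap (specElem bU k)
  have mem_W {τ : G × ℕ × ℕ → K} : τ ∈ W ↔ ∀ k, specElem bU k τ ∈ N := by
    simp [W, AddSubmonoid.mem_iInf]
  have smul_mem_W : ∀ b ∈ (scalarMulOps F K (specAlg bU t : Set (K ⊗[F] A)) : Set K), ∀ τ ∈ W,
      b • τ ∈ W := fun b hb τ hτ => mem_W.mpr fun k => by
    obtain ⟨hkI, hkR⟩ := mem_W.mp hτ k
    rw [map_smul]
    exact ⟨smul_mem_of_mem_scalarMulOps hI hb hkI, smul_mem_of_mem_scalarMulOps_self hb hkR⟩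
  have t_mem : t ∈ Submodule.span K (W : Set (G × ℕ × ℕ → K)) := by
    refine Submodule.span_mono (fun τ hτ => ?_)
      (mem_span_setOf_specElem_mem bU (N := N.toSubmodule.toAddSubgroup) h_span t)
    exact mem_W.mpr hτ
  obtain ⟨p, rfl, hp⟩ := exists_mvPolynomial_of_mem_scalarMulOps bU ht hc
  obtain ⟨τ, hτ, hpτ⟩ := exists_mem_aeval_ne_zero
    (scalarMulOps_specAlg_infinite ht hc hc0) smul_mem_W t_mem hc0
  have specAlg_le : specAlg bU τ ≤ N :=
    NonUnitalAlgebra.adjoin_le (Set.range_subset_iff.mpr (mem_W.mp hτ))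
  exact ⟨_, hpτ, mem_scalarMulOps.mpr
    (mulOps_mono specAlg_le (mem_scalarMulOps.mp (hp τ)))⟩

theorem IsCentralLocalization.eq_bot_or_eq [CommGroup G] [DecidableEq G] [FiniteDimensional F A]
    (hgr : IsAlgGrading F 𝒜) (hsimp : IsGradedSimple F 𝒜)
    (hcentral : ∀ φ ∈ centroid F (A := A) ⊓ endGrading F 𝒜 1, ∃ c : F, φ = c • 1)
    (ht : AlgebraicIndependent F t) {L : NonUnitalSubalgebra F (K ⊗[F] A)}
    (hL : IsCentralLocalization K (specAlg bU t) L) {I : Submodule F (K ⊗[F] A)}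
    (hIL : I ≤ L.toSubmodule) (hI : ∀ a ∈ L, ∀ x ∈ I, a * x ∈ I ∧ x * a ∈ I)
    (h_homog : I = ⨆ g, I ⊓ ((𝒜 g).baseChange K).restrictScalars F) :
    I = ⊥ ∨ I = L.toSubmodule := by
  refine or_iff_not_imp_left.mpr fun hI0 => ?_
  have hIR : ∀ a ∈ specAlg bU t, ∀ x ∈ I, a * x ∈ I ∧ x * a ∈ I := fun a ha => hI a (hL.le ha)
  have h_ideal : IsMulIdeal K (Submodule.span K (I : Set (K ⊗[F] A))) :=
    isMulIdeal_span (span_specAlg_eq_top hgr.1.submodule_iSup_eq_top ht) hIR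
  have h_top : Submodule.span K (I : Set (K ⊗[F] A)) = ⊤ :=
    ((hsimp.baseChange hgr hcentral).2 _ h_ideal (eq_iSup_span_inf h_homog)).resolve_left
      fun h => hI0 ((Submodule.eq_bot_iff I).mpr (Submodule.span_eq_bot.mp h))
  have h_span (g : G) := (span_inter_eq_of_span_eq_top (iSupIndep_baseChange hgr.1)
    h_homog h_top g).ge.trans (hL.span_inter_le_span_inf_inter hIL hI _)
  have : Nontrivial A := let ⟨_, _, hab⟩ := hsimp.1; nontrivial_of_ne _ _ hab
  have : Finite (Σ g, Fin (nU g)) := Module.Finite.finite_basis (hgr.1.collectedBasis bU)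
  obtain ⟨c, hc, hc0⟩ := hL.exists_ne_zero
  obtain ⟨d, hd0, hd⟩ := exists_ne_zero_mem_scalarMulOps_inter ht hc hc0 hIR h_span
  exact hL.eq_of_mem_scalarMulOps hIL hI hd0 hd

end GenericAlg

section Indeterminates

variable {F FF G A : Type*} [Field F] [Field FF] [Algebra F FF]
  [Algebra (MvPolynomial (G × ℕ × ℕ) F) FF] [IsScalarTower F (MvPolynomial (G × ℕ × ℕ) F) FF]

lemma algebraicIndependent_algebraMap_X
    (hinj : Function.Injective (algebraMap (MvPolynomial (G × ℕ × ℕ) F) FF)) :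
    AlgebraicIndependent F fun x : G × ℕ × ℕ =>
      algebraMap (MvPolynomial (G × ℕ × ℕ) F) FF (MvPolynomial.X x) :=
  (MvPolynomial.algebraicIndependent_X _ F).map'
    (f := IsScalarTower.toAlgHom F (MvPolynomial (G × ℕ × ℕ) F) FF) hinj

lemma genericAlg_eq_specAlg [NonUnitalNonAssocRing A] [Module F A] [SMulCommClass F A A]
    [IsScalarTower F A A] (𝒜 : G → Submodule F A) (nU : G → ℕ)
    (bU : ∀ g, Module.Basis (Fin (nU g)) F (𝒜 g)) :
    genericAlg F FF 𝒜 nU bU = specAlg bU fun x =>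
      algebraMap (MvPolynomial (G × ℕ × ℕ) F) FF (MvPolynomial.X x) := by
  have h_gen : genericElems F FF 𝒜 nU bU = Set.range fun k => specElem bU k fun x =>
      algebraMap (MvPolynomial (G × ℕ × ℕ) F) FF (MvPolynomial.X x) := by
    ext y
    simp [genericElems, specElem_apply, smul_tmul', Algebra.smul_def, eq_comm]
  rw [genericAlg, specAlg, h_gen]

end Indeterminates

end

/-- Generic-elements setup: the central localization `S_U⁻¹ F_U` of the algebra of generic
elements (realized inside `Ũ = FF ⊗ U` via the embedding `θ` of `Z_U = Z(M(F_U))_e` into `FF`)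
is a `G`-graded simple algebra whose multiplication algebra satisfies an ordinary polynomial
identity. -/
theorem central_localization_of_generic_algebra_graded_simple
    {F : Type*} [Field F] {G : Type*} [CommGroup G] [DecidableEq G]
    {FF : Type*} [Field FF] [Algebra F FF] [Algebra (MvPolynomial (G × ℕ × ℕ) F) FF]
    [IsScalarTower F (MvPolynomial (G × ℕ × ℕ) F) FF]
    (hinj : Function.Injective (algebraMap (MvPolynomial (G × ℕ × ℕ) F) FF))
    {A : Type*} [NonUnitalNonAssocRing A] [Module F A] [SMulCommClass F A A]
    [IsScalarTower F A A] [FiniteDimensional F A]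
    (𝒜 : G → Submodule F A) (hgr : IsAlgGrading F 𝒜) (hsimp : IsGradedSimple F 𝒜)
    (hbase : ∀ φ : Module.End F A,
      φ ∈ centroid F (A := A) ⊓ endGrading F 𝒜 1 ↔ ∃ c : F, φ = c • (1 : Module.End F A))
    (nU : G → ℕ) (bU : ∀ g : G, Module.Basis (Fin (nU g)) F (𝒜 g))
    -- `θ` is the embedding of `Z_U = Z(M(F_U))_e` into `FF`: the element `s ∈ Z_U` acts on
    -- `F_U ⊆ Ũ` as multiplication by the scalar `θ s`
    (θ : Module.End F ↥(genericAlg F FF 𝒜 nU bU) → FF)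
    (hθ : ∀ s ∈ centerMultE F FF 𝒜 (genericAlg F FF 𝒜 nU bU),
      ∀ x : ↥(genericAlg F FF 𝒜 nU bU), ((s x : ↥(genericAlg F FF 𝒜 nU bU)) : FF ⊗[F] A) =
        θ s • (x : FF ⊗[F] A))
    -- `L` is the central localization `S_U⁻¹ F_U`, as a subalgebra of `Ũ`
    (L : NonUnitalSubalgebra F (FF ⊗[F] A))
    (hL : (L : Set (FF ⊗[F] A)) =
      {y | ∃ s ∈ centerMultE F FF 𝒜 (genericAlg F FF 𝒜 nU bU), s ≠ 0 ∧
        ∃ x ∈ genericAlg F FF 𝒜 nU bU, y = (θ s)⁻¹ • x}) :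
    -- `L = S_U⁻¹ F_U` is a graded simple algebra ...
    ((∃ a ∈ L, ∃ b ∈ L, a * b ≠ 0) ∧
      ∀ I : Submodule F (FF ⊗[F] A), I ≤ L.toSubmodule →
        (∀ a ∈ L, ∀ x ∈ I, a * x ∈ I ∧ x * a ∈ I) →
        (I = ⨆ g, I ⊓ ((𝒜 g).baseChange FF).restrictScalars F) →
        I = ⊥ ∨ I = L.toSubmodule) ∧
    -- ... whose multiplication algebra satisfies an ordinary polynomial identity
    SatisfiesOrdinaryPI F (MultAlg F (A := ↥L) : Set (Module.End F ↥L)) := by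
  have ht := algebraicIndependent_algebraMap_X hinj
  have hcentral : ∀ φ ∈ centroid F (A := A) ⊓ endGrading F 𝒜 1, ∃ c : F, φ = c • 1 :=
    fun φ hφ => (hbase φ).mp hφ
  obtain ⟨a, b, hab⟩ := (hsimp.baseChange (K := FF) hgr hcentral).1
  have : Nontrivial (FF ⊗[F] A) := nontrivial_of_ne _ _ hab
  have h_span : Submodule.span FF (genericAlg F FF 𝒜 nU bU : Set (FF ⊗[F] A)) = ⊤ := by
    rw [genericAlg_eq_specAlg]
    exact span_specAlg_eq_top hgr.1.submodule_iSup_eq_top ht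
  have h_loc : IsCentralLocalization FF (genericAlg F FF 𝒜 nU bU) L :=
    isCentralLocalization_of_centerMultE h_span hθ hL
  refine ⟨⟨?_, fun I hIL hI h_homog => ?_⟩, satisfiesOrdinaryPI_multAlg FF L⟩
  · obtain ⟨x, hx, y, hy, hxy⟩ := exists_mul_ne_zero_of_span_eq_top h_span ⟨a, b, hab⟩
    exact ⟨x, h_loc.le hx, y, h_loc.le hy, hxy⟩
  · rw [genericAlg_eq_specAlg] at h_loc
    exact h_loc.eq_bot_or_eq hgr hsimp hcentral ht hIL hI h_homog
end

section
/- With the generic-elements setup (G abelian, U a G-graded simple algebra finite-dimensional over F = Γ(U)_e, F_U the algebra of generic elements inside Ũ = F̃ ⊗_F U, S_U = Z(M(F_U))_e \ {0}): the field K_U = Γ(S_U^{-1}F_U)_e, the identity component of the graded centroid of the central localization S_U^{-1}F_U, is isomorphic as an F-algebra to the field of fractions of Z_U = Z(M(F_U))_e. -/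
open TensorProduct

/-!
The localization `L = S_U⁻¹F_U` spans `Ũ = F̃ ⊗ U` over `F̃` degree by degree, because the matrix of
indeterminates is invertible over `F̃`. Graded simplicity makes the annihilator of `U`, hence that
of `Ũ`, zero, so a centroid element of `L` of degree `e` extends to an `F̃`-linear centroid element
of `Ũ`. Applying functionals on `F̃` to the left tensor factor turns that extension into elements
of `Γ(U)_e = F`; hence it is multiplication by some `c ∈ F̃`, and `K_U` becomes the set of `c` with
`c L ⊆ L`. If `c L ⊆ L`, then denominators can be cleared in `c m` for every `m ∈ M(F_U)`; taking
for `m` a nonzero element of `Z_U` exhibits `c` as a quotient of two elements of `Z_U`.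
-/

section LeftSlice

variable {R M N P : Type*} [CommSemiring R] [AddCommMonoid M] [Module R M]
  [AddCommMonoid N] [Module R N] [AddCommMonoid P] [Module R P]

/-- The slice map `f ⊗ id : M ⊗ N → N` of a functional `f` on the left factor, used to descend
elements and maps from `FF ⊗ A` to `A`. -/
noncomputable def leftSlice (f : Module.Dual R M) : M ⊗[R] N →ₗ[R] N :=
  (TensorProduct.lid R N).toLinearMap ∘ₗ f.rTensor N

@[simp]
theorem leftSlice_tmul (f : Module.Dual R M) (m : M) (n : N) :
    leftSlice f (m ⊗ₜ[R] n) = f m • n := by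
  simp [leftSlice]

theorem leftSlice_lTensor (f : Module.Dual R M) (g : N →ₗ[R] P) (w : M ⊗[R] N) :
    leftSlice f (g.lTensor M w) = g (leftSlice f w) := by
  induction w using TensorProduct.induction_on with
  | zero => simp only [map_zero]
  | tmul m n => simp
  | add x y hx hy => simp only [map_add, hx, hy]

theorem eq_zero_of_forall_leftSlice_eq_zero [Module.Free R M] {w : M ⊗[R] N}
    (hw : ∀ f : Module.Dual R M, leftSlice f w = 0) : w = 0 := by
  classical
  let b := Module.Free.chooseBasis R M
  refine (TensorProduct.equivFinsuppOfBasisLeft b).injective (Finsupp.ext fun i => ?_)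
  rw [TensorProduct.equivFinsuppOfBasisLeft_apply, map_zero]
  exact hw (b.coord i)

variable {S : Type*} [Semiring S] [Algebra R S]

theorem leftSlice_mem_of_mem_baseChange (f : Module.Dual R S) {p : Submodule R N}
    {w : S ⊗[R] N} (hw : w ∈ p.baseChange S) : leftSlice f w ∈ p := by
  obtain ⟨z, rfl⟩ := hw
  rw [LinearMap.baseChange_eq_ltensor, leftSlice_lTensor]
  exact (leftSlice f z).2

variable {A : Type*} [NonUnitalNonAssocSemiring A] [Module R A] [SMulCommClass R A A]
  [IsScalarTower R A A]

theorem leftSlice_mul_one_tmul (f : Module.Dual R S) (w : S ⊗[R] A) (u : A) :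
    leftSlice f (w * (1 ⊗ₜ[R] u)) = leftSlice f w * u := by
  induction w using TensorProduct.induction_on with
  | zero => simp only [zero_mul, map_zero]
  | tmul c a => simp [smul_mul_assoc]
  | add x y hx hy => simp only [add_mul, map_add, hx, hy]

theorem leftSlice_one_tmul_mul (f : Module.Dual R S) (w : S ⊗[R] A) (u : A) :
    leftSlice f ((1 ⊗ₜ[R] u) * w) = u * leftSlice f w := by
  induction w using TensorProduct.induction_on with
  | zero => simp only [mul_zero, map_zero]
  | tmul c a => simp [mul_smul_comm]
  | add x y hx hy => simp only [mul_add, map_add, hx, hy]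

end LeftSlice

section MulAnnihilator

section Basic

variable (K : Type*) [Semiring K] (A : Type*) [NonUnitalNonAssocSemiring A] [Module K A]
  [SMulCommClass K A A] [IsScalarTower K A A]

/-- The two-sided annihilator of a nonassociative algebra in itself. -/
def mulAnnihilator : Submodule K A :=
  ⨅ u : A, LinearMap.ker (LinearMap.mulRight K u) ⊓ LinearMap.ker (LinearMap.mulLeft K u)

variable {K A}

theorem mem_mulAnnihilator {w : A} :
    w ∈ mulAnnihilator K A ↔ ∀ u : A, w * u = 0 ∧ u * w = 0 := by
  simp [mulAnnihilator]

theorem mem_mulAnnihilator_of_span_eq_top {s : Set A} (hs : Submodule.span K s = ⊤) {w : A}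
    (hw : ∀ u ∈ s, w * u = 0 ∧ u * w = 0) : w ∈ mulAnnihilator K A := by
  have mulLeft_eq_zero : LinearMap.mulLeft K w = 0 := LinearMap.ext_on hs fun u hu => (hw u hu).1
  have mulRight_eq_zero : LinearMap.mulRight K w = 0 := LinearMap.ext_on hs fun u hu => (hw u hu).2
  exact mem_mulAnnihilator.2 fun u =>
    ⟨LinearMap.congr_fun mulLeft_eq_zero u, LinearMap.congr_fun mulRight_eq_zero u⟩

end Basic

theorem mulAnnihilator_baseChange_eq_bot {F : Type*} [CommSemiring F] {A : Type*}
    [NonUnitalNonAssocSemiring A] [Module F A] [SMulCommClass F A A] [IsScalarTower F A A]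
    (E : Type*) [CommSemiring E] [Algebra F E] [Module.Free F E] (hA : mulAnnihilator F A = ⊥) :
    mulAnnihilator E (E ⊗[F] A) = ⊥ := by
  refine (Submodule.eq_bot_iff _).2 fun w hw => eq_zero_of_forall_leftSlice_eq_zero fun f => ?_
  rw [← Submodule.mem_bot F, ← hA, mem_mulAnnihilator]
  intro u
  obtain ⟨mul_eq, eq_mul⟩ := mem_mulAnnihilator.1 hw (1 ⊗ₜ[F] u)
  rw [← leftSlice_mul_one_tmul, ← leftSlice_one_tmul_mul, mul_eq, eq_mul, map_zero]
  exact ⟨rfl, rfl⟩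

section Graded

variable {K : Type*} [Field K] {G : Type*} [CommGroup G] [DecidableEq G]
  {A : Type*} [NonUnitalNonAssocSemiring A] [Module K A]

theorem decompose_apply_of_mem_endGrading (𝒜 : G → Submodule K A) [DirectSum.Decomposition 𝒜]
    {h : G} {ψ : Module.End K A} (hψ : ψ ∈ endGrading K 𝒜 h) (g : G) (w : A) :
    (DirectSum.decompose 𝒜 (ψ w) (h * g) : A) = ψ (DirectSum.decompose 𝒜 w g) := by
  induction w using DirectSum.Decomposition.inductionOn 𝒜 with
  | zero => simp
  | @homogeneous i m =>
    have hm := hψ i m m.2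
    by_cases hig : i = g
    · subst hig
      rw [DirectSum.decompose_of_mem_same 𝒜 hm, DirectSum.decompose_of_mem_same 𝒜 m.2]
    · rw [DirectSum.decompose_of_mem_ne 𝒜 hm (mt mul_left_cancel hig),
        DirectSum.decompose_of_mem_ne 𝒜 m.2 hig, map_zero]
  | add a b ha hb => simp [DirectSum.decompose_add, ha, hb]

variable [SMulCommClass K A A] [IsScalarTower K A A] {𝒜 : G → Submodule K A}

theorem IsAlgGrading.isHomogSubmodule_mulAnnihilator (h𝒜 : IsAlgGrading K 𝒜) :
    IsHomogSubmodule K 𝒜 (mulAnnihilator K A) := by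
  classical
  let _ : DirectSum.Decomposition 𝒜 := h𝒜.1.chooseDecomposition
  have component_mem (w : A) (hw : w ∈ mulAnnihilator K A) (g : G) :
      (DirectSum.decompose 𝒜 w g : A) ∈ mulAnnihilator K A := by
    have span_homogeneous : Submodule.span K (⋃ h, (𝒜 h : Set A)) = ⊤ := by
      rw [Submodule.span_iUnion]
      simpa using h𝒜.1.submodule_iSup_eq_top
    refine mem_mulAnnihilator_of_span_eq_top span_homogeneous fun u hu => ?_
    obtain ⟨h, hu⟩ := Set.mem_iUnion.1 hu
    have mulRight_mem : LinearMap.mulRight K u ∈ endGrading K 𝒜 h := fun i x hx => by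
      rw [mul_comm h i]
      exact h𝒜.2 i h x hx u hu
    have mulLeft_mem : LinearMap.mulLeft K u ∈ endGrading K 𝒜 h := fun i x hx =>
      h𝒜.2 h i u hu x hx
    have mul_comp := decompose_apply_of_mem_endGrading 𝒜 mulRight_mem g w
    have comp_mul := decompose_apply_of_mem_endGrading 𝒜 mulLeft_mem g w
    rw [LinearMap.mulRight_apply, LinearMap.mulRight_apply,
      (mem_mulAnnihilator.1 hw u).1] at mul_comp
    rw [LinearMap.mulLeft_apply, LinearMap.mulLeft_apply,
      (mem_mulAnnihilator.1 hw u).2] at comp_mul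
    simpa using And.intro mul_comp.symm comp_mul.symm
  refine le_antisymm (fun w hw => ?_) (iSup_le fun g => inf_le_left)
  rw [← DirectSum.sum_support_decompose 𝒜 w]
  exact Submodule.sum_mem _ fun g _ =>
    Submodule.mem_iSup_of_mem g ⟨component_mem w hw g, (DirectSum.decompose 𝒜 w g).2⟩

theorem IsGradedSimple.mulAnnihilator_eq_bot (h𝒜 : IsAlgGrading K 𝒜)
    (hsimp : IsGradedSimple K 𝒜) : mulAnnihilator K A = ⊥ := by
  have isMulIdeal : IsMulIdeal K (mulAnnihilator K A) := fun a x hx => by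
    rw [(mem_mulAnnihilator.1 hx a).1, (mem_mulAnnihilator.1 hx a).2]
    exact ⟨zero_mem _, zero_mem _⟩
  refine (hsimp.2 _ isMulIdeal h𝒜.isHomogSubmodule_mulAnnihilator).resolve_right fun h_top => ?_
  obtain ⟨a, b, hab⟩ := hsimp.1
  exact hab (mem_mulAnnihilator.1 (h_top ▸ Submodule.mem_top : a ∈ mulAnnihilator K A) b).1

end Graded

end MulAnnihilator

section Centroid

section Basic

variable {K : Type*} [Field K] {A : Type*} [NonUnitalNonAssocSemiring A] [Module K A]
  [SMulCommClass K A A] [IsScalarTower K A A]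

theorem mul_comm_of_mem_centroid_of_mem_multAlg
    {φ m : Module.End K A} (hφ : φ ∈ centroid K (A := A)) (hm : m ∈ MultAlg K (A := A)) :
    φ * m = m * φ := by
  suffices MultAlg K (A := A) ≤ NonUnitalSubalgebra.centralizer K {φ} from
    (NonUnitalSubalgebra.mem_centralizer_iff K).1 (this hm) φ rfl
  refine NonUnitalAlgebra.adjoin_le ?_
  rintro _ (⟨a, rfl⟩ | ⟨a, rfl⟩) _ rfl
  · exact LinearMap.ext fun x => (hφ a x).1
  · exact LinearMap.ext fun x => (hφ a x).2

theorem mem_centroid_of_span_eq_top {s : Set A} (hs : Submodule.span K s = ⊤)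
    {Φ : Module.End K A}
    (hΦ : ∀ a ∈ s, ∀ x ∈ s, Φ (a * x) = a * Φ x ∧ Φ (x * a) = Φ x * a) :
    Φ ∈ centroid K (A := A) := by
  have comm_of_mem {a : A} (ha : a ∈ s) (x : A) : Φ (a * x) = a * Φ x ∧ Φ (x * a) = Φ x * a := by
    have comm_mulLeft : Φ ∘ₗ LinearMap.mulLeft K a = LinearMap.mulLeft K a ∘ₗ Φ :=
      LinearMap.ext_on hs fun x hx => (hΦ a ha x hx).1
    have comm_mulRight : Φ ∘ₗ LinearMap.mulRight K a = LinearMap.mulRight K a ∘ₗ Φ :=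
      LinearMap.ext_on hs fun x hx => (hΦ a ha x hx).2
    exact ⟨LinearMap.congr_fun comm_mulLeft x, LinearMap.congr_fun comm_mulRight x⟩
  intro a x
  have comp_mulRight : Φ ∘ₗ LinearMap.mulRight K x = LinearMap.mulRight K (Φ x) :=
    LinearMap.ext_on hs fun a ha => (comm_of_mem ha x).1
  have comp_mulLeft : Φ ∘ₗ LinearMap.mulLeft K x = LinearMap.mulLeft K (Φ x) :=
    LinearMap.ext_on hs fun a ha => (comm_of_mem ha x).2
  exact ⟨LinearMap.congr_fun comp_mulRight a, LinearMap.congr_fun comp_mulLeft a⟩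

end Basic

theorem exists_mem_centroid_extending {F E B : Type*} [Field F] [Field E] [NonUnitalNonAssocRing B]
    [Module F B] [SMulCommClass F B B] [IsScalarTower F B B]
    [Module E B] [SMulCommClass E B B] [IsScalarTower E B B]
    (hB : mulAnnihilator E B = ⊥) {L : NonUnitalSubalgebra F B}
    (hL : Submodule.span E (L : Set B) = ⊤) {φ : Module.End F L} (hφ : φ ∈ centroid F (A := L)) :
    ∃ Φ ∈ centroid E (A := B), ∀ x : L, Φ x = φ x := by
  have map_mul_right (x a : L) : (φ x * a : B) = x * φ a :=
    congrArg Subtype.val (((hφ a x).2.symm).trans (hφ x a).1)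
  let b := Module.Basis.ofSpan hL.ge
  have b_mem (i) : b i ∈ L := Module.Basis.ofSpan_subset hL.ge ⟨i, rfl⟩
  let Φ : Module.End E B := b.constr E fun i => (φ ⟨b i, b_mem i⟩ : B)
  have Φ_basis (i) : Φ (b i) = φ ⟨b i, b_mem i⟩ := b.constr_basis E _ i
  have Φ_mul_coe (y : B) (a : L) : Φ y * a = y * φ a := by
    have : LinearMap.mulRight E (a : B) ∘ₗ Φ = LinearMap.mulRight E (φ a : B) := b.ext fun i => by
      simpa [Φ_basis] using map_mul_right ⟨b i, b_mem i⟩ a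
    exact LinearMap.congr_fun this y
  have coe_mul_Φ (y : B) (a : L) : a * Φ y = φ a * y := by
    have : LinearMap.mulLeft E (a : B) ∘ₗ Φ = LinearMap.mulLeft E (φ a : B) := b.ext fun i => by
      simpa [Φ_basis] using (map_mul_right a ⟨b i, b_mem i⟩).symm
    exact LinearMap.congr_fun this y
  -- Off the basis, `Φ x` and `φ x` agree because their difference annihilates the spanning set `L`.
  have Φ_coe (x : L) : Φ x = φ x := by
    rw [← sub_eq_zero, ← Submodule.mem_bot E, ← hB]
    refine mem_mulAnnihilator_of_span_eq_top hL fun a ha => ?_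
    lift a to L using ha
    rw [sub_mul, mul_sub, Φ_mul_coe, coe_mul_Φ, map_mul_right, map_mul_right, sub_self, sub_self]
    exact ⟨rfl, rfl⟩
  refine ⟨Φ, mem_centroid_of_span_eq_top hL fun a ha x hx => ?_, Φ_coe⟩
  lift a to L using ha
  lift x to L using hx
  rw [← NonUnitalSubalgebra.coe_mul, ← NonUnitalSubalgebra.coe_mul, Φ_coe, Φ_coe, Φ_coe,
    (hφ a x).1, (hφ a x).2]
  exact ⟨rfl, rfl⟩

section BaseChange

variable {F E A : Type*} [Field F] [Field E] [Algebra F E]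
  [NonUnitalNonAssocRing A] [Module F A] [SMulCommClass F A A] [IsScalarTower F A A]
  {G : Type*} [CommGroup G] {𝒜 : G → Submodule F A}

theorem leftSlice_comp_mem_centroid_inf_endGrading (f : Module.Dual F E) {h : G}
    {Φ : Module.End E (E ⊗[F] A)}
    (hΦ : Φ ∈ centroid E (A := E ⊗[F] A) ⊓ endGrading E (fun g => (𝒜 g).baseChange E) h) :
    leftSlice f ∘ₗ Φ.restrictScalars F ∘ₗ TensorProduct.mk F E A 1 ∈
      centroid F (A := A) ⊓ endGrading F 𝒜 h := by
  refine ⟨fun a x => ?_, fun g x hx =>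
    leftSlice_mem_of_mem_baseChange f (hΦ.2 g _ (Submodule.tmul_mem_baseChange_of_mem 1 hx))⟩
  have one_tmul_mul (u v : A) : (1 : E) ⊗ₜ[F] (u * v) = (1 ⊗ₜ u) * (1 ⊗ₜ v) := by simp
  simp only [LinearMap.comp_apply, LinearMap.restrictScalars_apply, TensorProduct.mk_apply]
  rw [one_tmul_mul, one_tmul_mul, (hΦ.1 _ _).1, (hΦ.1 _ _).2, leftSlice_one_tmul_mul,
    leftSlice_mul_one_tmul]
  exact ⟨rfl, rfl⟩

theorem exists_eq_smul_one_of_mem_centroid_baseChange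
    (hA : ∀ ψ ∈ centroid F (A := A) ⊓ endGrading F 𝒜 1, ∃ c : F, ψ = c • (1 : Module.End F A))
    {Φ : Module.End E (E ⊗[F] A)}
    (hΦ : Φ ∈ centroid E (A := E ⊗[F] A) ⊓ endGrading E (fun g => (𝒜 g).baseChange E) 1) :
    ∃ c : E, Φ = c • (1 : Module.End E (E ⊗[F] A)) := by
  have slice_scalar (f : Module.Dual F E) :
      ∃ c : F, ∀ u : A, leftSlice f (Φ (1 ⊗ₜ u)) = c • u :=
    (hA _ (leftSlice_comp_mem_centroid_inf_endGrading f hΦ)).imp fun _ h => LinearMap.congr_fun h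
  rcases subsingleton_or_nontrivial A with _ | _
  · exact ⟨0, TensorProduct.AlgebraTensorModule.ext fun c a => by simp [Subsingleton.elim a 0]⟩
  obtain ⟨u₀, hu₀⟩ := exists_ne (0 : A)
  obtain ⟨g, hg⟩ := Module.Projective.exists_dual_eq_one F hu₀
  obtain ⟨c, hc⟩ := (TensorProduct.rid F E).symm.surjective (g.lTensor E (Φ (1 ⊗ₜ u₀)))
  have slice_eq (f : Module.Dual F E) (u : A) : leftSlice f (Φ (1 ⊗ₜ u)) = f c • u := by
    obtain ⟨d, hd⟩ := slice_scalar f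
    have : f c = d := by
      simpa [hd, hg, leftSlice_lTensor] using congrArg (leftSlice f) hc
    rw [hd, this]
  have apply_one_tmul (u : A) : Φ (1 ⊗ₜ u) = c ⊗ₜ u := sub_eq_zero.1 <|
    eq_zero_of_forall_leftSlice_eq_zero fun f => by rw [map_sub, slice_eq, leftSlice_tmul, sub_self]
  refine ⟨c, TensorProduct.AlgebraTensorModule.ext fun d u => ?_⟩
  calc Φ (d ⊗ₜ u) = Φ (d • (1 ⊗ₜ u)) := by rw [TensorProduct.smul_tmul', smul_eq_mul, mul_one]
    _ = c • (d ⊗ₜ u) := by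
      rw [map_smul, apply_one_tmul, TensorProduct.smul_tmul', TensorProduct.smul_tmul',
        smul_eq_mul, smul_eq_mul, mul_comm]

end BaseChange

end Centroid

section ActsAsScalar

variable {F E B : Type*} [Field F] [Field E] [NonUnitalNonAssocRing B] [Module F B] [Module E B]
  {L : NonUnitalSubalgebra F B} {φ ψ : Module.End F L} {c d : E}

/-- `φ` is multiplication by the scalar `c`, where the scalars `E` act on an algebra `B`
containing `L` but need not preserve `L`. -/
def ActsAsScalar (φ : Module.End F L) (c : E) : Prop :=
  ∀ x : L, (φ x : B) = c • (x : B)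

namespace ActsAsScalar

theorem zero : ActsAsScalar (0 : Module.End F L) (0 : E) := fun x => by simp

theorem add (hφ : ActsAsScalar φ c) (hψ : ActsAsScalar ψ d) : ActsAsScalar (φ + ψ) (c + d) :=
  fun x => by simp [add_smul, hφ x, hψ x]

theorem mul (hφ : ActsAsScalar φ c) (hψ : ActsAsScalar ψ d) : ActsAsScalar (φ * ψ) (c * d) :=
  fun x => by rw [Module.End.mul_apply, hφ, hψ, mul_smul]

theorem smul [Algebra F E] [IsScalarTower F E B] (r : F) (hφ : ActsAsScalar φ c) :
    ActsAsScalar (r • φ) (r • c) :=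
  fun x => by simp [hφ x]

theorem end_ext (hφ : ActsAsScalar φ c) (hψ : ActsAsScalar ψ c) : φ = ψ :=
  LinearMap.ext fun x => Subtype.ext ((hφ x).trans (hψ x).symm)

theorem scalar_ext [Nontrivial L] (hc : ActsAsScalar φ c) (hd : ActsAsScalar φ d) : c = d := by
  obtain ⟨x, hx⟩ := exists_ne (0 : L)
  exact smul_left_injective E (by simpa using hx : (x : B) ≠ 0) ((hc x).symm.trans (hd x))

theorem eq_zero_iff [Nontrivial L] (hφ : ActsAsScalar φ c) : φ = 0 ↔ c = 0 :=
  ⟨fun h => (h ▸ hφ).scalar_ext zero, fun h => (h ▸ hφ).end_ext zero⟩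

theorem mem_centroid [SMulCommClass F B B] [IsScalarTower F B B] [SMulCommClass E B B]
    [IsScalarTower E B B] (hφ : ActsAsScalar φ c) : φ ∈ centroid F (A := L) := fun a x => by
  simp only [Subtype.ext_iff, NonUnitalSubalgebra.coe_mul, hφ _, mul_smul_comm, smul_mul_assoc,
    and_self]

end ActsAsScalar

theorem exists_actsAsScalar_iff_forall_smul_mem [Algebra F E] [IsScalarTower F E B] :
    (∃ φ : Module.End F L, ActsAsScalar φ c) ↔ ∀ x ∈ L, c • x ∈ L := by
  refine ⟨fun ⟨φ, hφ⟩ x hx => hφ ⟨x, hx⟩ ▸ (φ ⟨x, hx⟩).2, fun h => ⟨?_, fun _ => ?_⟩⟩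
  · exact
      { toFun x := ⟨c • (x : B), h x x.2⟩
        map_add' _ _ := Subtype.ext (smul_add _ _ _)
        map_smul' _ _ := Subtype.ext (smul_comm _ _ _) }
  · rfl

/-- The scalar by which `φ` acts; an arbitrary value when `φ` acts by no scalar. -/
noncomputable def actingScalar (E : Type*) [Field E] [Module E B] (φ : Module.End F L) : E :=
  Classical.epsilon (ActsAsScalar φ)

theorem ActsAsScalar.actingScalar_eq [Nontrivial L] (hφ : ActsAsScalar φ c) :
    actingScalar E φ = c :=
  (Classical.epsilon_spec (p := ActsAsScalar φ) ⟨c, hφ⟩).scalar_ext hφ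

theorem injOn_actingScalar [Nontrivial L] :
    Set.InjOn (actingScalar E) {φ : Module.End F L | ∃ c : E, ActsAsScalar φ c} := by
  rintro φ ⟨c, hφ⟩ ψ ⟨d, hψ⟩ h
  rw [hφ.actingScalar_eq, hψ.actingScalar_eq] at h
  exact hφ.end_ext (h ▸ hψ)

theorem image_actingScalar [Nontrivial L] :
    actingScalar E '' {φ : Module.End F L | ∃ c : E, ActsAsScalar φ c} =
      {c | ∃ φ : Module.End F L, ActsAsScalar φ c} := by
  refine Set.Subset.antisymm ?_ fun c ⟨φ, hφ⟩ => ⟨φ, ⟨c, hφ⟩, hφ.actingScalar_eq⟩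
  rintro _ ⟨φ, ⟨c, hφ⟩, rfl⟩
  exact ⟨φ, hφ.actingScalar_eq ▸ hφ⟩

end ActsAsScalar

section CentralLocalization

theorem exists_mem_multAlg_eq_smul_of_generator
    {F E B : Type*} [Field F] [Field E] [NonUnitalNonAssocRing B] [Module F B]
    [SMulCommClass F B B] [IsScalarTower F B B] [Module E B]
    [SMulCommClass E B B] [IsScalarTower E B B] {R : NonUnitalSubalgebra F B} {d : E}
    {a : R} (ha : d • (a : B) ∈ R) {m : Module.End F R}
    (hm : m = LinearMap.mulLeft F a ∨ m = LinearMap.mulRight F a) :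
    ∃ m' ∈ MultAlg F (A := R), ∀ x : R, (m' x : B) = d • (m x : B) := by
  rcases hm with rfl | rfl
  · exact ⟨LinearMap.mulLeft F ⟨d • (a : B), ha⟩,
      NonUnitalAlgebra.subset_adjoin F (Or.inl ⟨_, rfl⟩), fun x => smul_mul_assoc d (a : B) x⟩
  · exact ⟨LinearMap.mulRight F ⟨d • (a : B), ha⟩,
      NonUnitalAlgebra.subset_adjoin F (Or.inr ⟨_, rfl⟩), fun x => mul_smul_comm d (x : B) a⟩

variable {F E B : Type*} [Field F] [Field E] [Algebra F E] [NonUnitalNonAssocRing B] [Module F B]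
  [SMulCommClass F B B] [IsScalarTower F B B] [Module E B] [IsScalarTower F E B]

/-- The scalars by which elements of the multiplication algebra of `R` act. For a graded algebra
of generic elements this is the image of `Z_U = Z(M(F_U))_e` in `F̃`. -/
def multScalars (E : Type*) [Field E] [Algebra F E] [Module E B] [IsScalarTower F E B]
    (R : NonUnitalSubalgebra F B) : NonUnitalSubalgebra F E where
  carrier := {d | ∃ m ∈ MultAlg F (A := R), ActsAsScalar m d}
  add_mem' := fun ⟨m, hm, hmc⟩ ⟨n, hn, hnd⟩ => ⟨m + n, add_mem hm hn, hmc.add hnd⟩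
  zero_mem' := ⟨0, zero_mem _, .zero⟩
  mul_mem' := fun ⟨m, hm, hmc⟩ ⟨n, hn, hnd⟩ => ⟨m * n, mul_mem hm hn, hmc.mul hnd⟩
  smul_mem' := fun r _ ⟨m, hm, hmc⟩ => ⟨r • m, SMulMemClass.smul_mem r hm, hmc.smul r⟩

variable {R L : NonUnitalSubalgebra F B} {c d : E}

theorem mem_multScalars :
    d ∈ multScalars E R ↔ ∃ m ∈ MultAlg F (A := R), ActsAsScalar m d :=
  Iff.rfl

theorem smul_mem_of_mem_multScalars (hd : d ∈ multScalars E R) {x : B} (hx : x ∈ R) :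
    d • x ∈ R :=
  exists_actsAsScalar_iff_forall_smul_mem.1 (hd.imp fun _ => And.right) x hx

/-- The localization of `R` at the nonzero elements of `multScalars E R`, realized in `B` as the
set of elements with a denominator. -/
def centralLocalization (E : Type*) [Field E] [Algebra F E] [Module E B] [IsScalarTower F E B]
    (R : NonUnitalSubalgebra F B) : Set B :=
  {y | ∃ d ∈ multScalars E R, d ≠ 0 ∧ d • y ∈ R}

theorem coe_subset_centralLocalization (hd : d ∈ multScalars E R) (hd₀ : d ≠ 0) :
    (R : Set B) ⊆ centralLocalization E R :=
  fun _ hx => ⟨d, hd, hd₀, smul_mem_of_mem_multScalars hd hx⟩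

variable [SMulCommClass E B B] [IsScalarTower E B B]

theorem exists_clear_denominator_of_mem_multAlg
    (hR : ∀ a ∈ R, ∃ d ∈ multScalars E R, d ≠ 0 ∧ (d * c) • a ∈ R)
    {m : Module.End F R} (hm : m ∈ MultAlg F (A := R)) :
    ∃ d ∈ multScalars E R, d ≠ 0 ∧
      ∃ m' ∈ MultAlg F (A := R), ∀ x : R, (m' x : B) = (d * c) • (m x : B) := by
  induction hm using NonUnitalAlgebra.adjoin_induction with
  | mem m hm =>
    obtain ⟨a, ha⟩ : ∃ a, m = LinearMap.mulLeft F a ∨ m = LinearMap.mulRight F a := by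
      rcases hm with ⟨a, rfl⟩ | ⟨a, rfl⟩
      exacts [⟨a, Or.inl rfl⟩, ⟨a, Or.inr rfl⟩]
    obtain ⟨d, hd, hd₀, hda⟩ := hR a a.2
    exact ⟨d, hd, hd₀, exists_mem_multAlg_eq_smul_of_generator hda ha⟩
  | zero =>
    obtain ⟨d, hd, hd₀, -⟩ := hR 0 (zero_mem _)
    exact ⟨d, hd, hd₀, 0, zero_mem _, by simp⟩
  | add m n _ _ hm hn =>
    obtain ⟨d, ⟨s, hs, hsd⟩, hd₀, m', hm', hm'_eq⟩ := hm
    obtain ⟨e, ⟨t, ht, hte⟩, he₀, n', hn', hn'_eq⟩ := hn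
    refine ⟨d * e, mul_mem ⟨s, hs, hsd⟩ ⟨t, ht, hte⟩, mul_ne_zero hd₀ he₀, t * m' + s * n',
      add_mem (mul_mem ht hm') (mul_mem hs hn'), fun x => ?_⟩
    simp only [LinearMap.add_apply, Module.End.mul_apply, NonUnitalSubalgebra.coe_add, hte _, hsd _,
      hm'_eq, hn'_eq, smul_add, smul_smul]
    congr 2 <;> ring
  | mul m n _ _ hm _ =>
    obtain ⟨d, hd, hd₀, m', hm', hm'_eq⟩ := hm
    exact ⟨d, hd, hd₀, m' * n, mul_mem hm' ‹_›, fun x => hm'_eq (n x)⟩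
  | smul r m _ hm =>
    obtain ⟨d, hd, hd₀, m', hm', hm'_eq⟩ := hm
    refine ⟨d, hd, hd₀, r • m', SMulMemClass.smul_mem r hm', fun x => ?_⟩
    simp only [LinearMap.smul_apply, NonUnitalSubalgebra.coe_smul, hm'_eq]
    exact smul_comm _ _ _

theorem forall_smul_mem_centralLocalization_iff (h : (centralLocalization E R).Nonempty) :
    (∀ y ∈ centralLocalization E R, c • y ∈ centralLocalization E R) ↔
      ∃ a ∈ multScalars E R, ∃ b ∈ multScalars E R, b ≠ 0 ∧ c = a / b := by
  constructor
  · intro hc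
    obtain ⟨-, d₀, hd₀, hd₀_ne, -⟩ := h
    have clear (x : B) (hx : x ∈ R) : ∃ d ∈ multScalars E R, d ≠ 0 ∧ (d * c) • x ∈ R := by
      simpa only [mul_smul] using! hc x (coe_subset_centralLocalization hd₀ hd₀_ne hx)
    obtain ⟨m, hm, hm_act⟩ := mem_multScalars.1 hd₀
    obtain ⟨d, hd, hd_ne, m', hm', hm'_eq⟩ := exists_clear_denominator_of_mem_multAlg clear hm
    refine ⟨d * c * d₀, ⟨m', hm', fun x => by rw [hm'_eq, hm_act, smul_smul]⟩,
      d * d₀, mul_mem hd hd₀, mul_ne_zero hd_ne hd₀_ne, ?_⟩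
    field_simp
  · rintro ⟨a, ha, b, hb, hb_ne, rfl⟩ y ⟨d, hd, hd_ne, hdy⟩
    refine ⟨b * d, mul_mem hb hd, mul_ne_zero hb_ne hd_ne, ?_⟩
    have : (b * d) • (a / b) • y = a • d • y := by
      rw [smul_smul, smul_smul]
      congr 1
      field_simp
    exact this ▸ smul_mem_of_mem_multScalars ha hdy

theorem exists_actsAsScalar_iff_exists_eq_div (hL : (L : Set B) = centralLocalization E R) :
    (∃ φ : Module.End F L, ActsAsScalar φ c) ↔
      ∃ a ∈ multScalars E R, ∃ b ∈ multScalars E R, b ≠ 0 ∧ c = a / b := by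
  rw [exists_actsAsScalar_iff_forall_smul_mem,
    ← forall_smul_mem_centralLocalization_iff (hL ▸ ⟨0, zero_mem L⟩), ← hL]
  rfl

end CentralLocalization

section CentroidScalars

theorem baseChange_iSup {R S M ι : Type*} [CommSemiring R] [Semiring S] [Algebra R S]
    [AddCommMonoid M] [Module R M] (p : ι → Submodule R M) :
    (⨆ i, p i).baseChange S = ⨆ i, (p i).baseChange S := by
  refine le_antisymm ?_ (iSup_le fun i => Submodule.baseChange_mono S (le_iSup p i))
  rw [Submodule.baseChange_eq_span, Submodule.map_iSup, Submodule.span_le]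
  change ⨆ i, _ ≤ (⨆ i, (p i).baseChange S).restrictScalars R
  refine iSup_le fun i => Submodule.map_le_iff_le_comap.2 fun x hx => ?_
  exact Submodule.mem_iSup_of_mem i (Submodule.tmul_mem_baseChange_of_mem 1 hx)

variable {F E A : Type*} [Field F] [Field E] [Algebra F E]
  [NonUnitalNonAssocRing A] [Module F A] [SMulCommClass F A A] [IsScalarTower F A A]

variable {G : Type*} [CommGroup G] {𝒜 : G → Submodule F A}
  {L R : NonUnitalSubalgebra F (E ⊗[F] A)}

theorem ActsAsScalar.mem_endGrading_one {φ : Module.End F L} {c : E} (hφ : ActsAsScalar φ c) :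
    φ ∈ endGrading F (subComp F E 𝒜 L) 1 := fun g x hx => by
  change (φ x : E ⊗[F] A) ∈ (𝒜 (1 * g)).baseChange E
  rw [hφ, one_mul]
  exact Submodule.smul_mem _ c hx

theorem exists_actsAsScalar_of_mem_centroid_inf_endGrading (h𝒜 : ⨆ g, 𝒜 g = ⊤)
    (hann : mulAnnihilator F A = ⊥)
    (hA : ∀ ψ ∈ centroid F (A := A) ⊓ endGrading F 𝒜 1, ∃ c : F, ψ = c • (1 : Module.End F A))
    (hspan : ∀ g, (𝒜 g).baseChange E ≤ Submodule.span E (L ∩ (𝒜 g).baseChange E))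
    {φ : Module.End F L} (hφ : φ ∈ centroid F (A := L) ⊓ endGrading F (subComp F E 𝒜 L) 1) :
    ∃ c : E, ActsAsScalar φ c := by
  have span_L : Submodule.span E (L : Set (E ⊗[F] A)) = ⊤ := by
    rw [eq_top_iff, ← Submodule.baseChange_top, ← h𝒜, baseChange_iSup]
    exact iSup_le fun g => (hspan g).trans (Submodule.span_mono Set.inter_subset_left)
  obtain ⟨Φ, Φ_mem, Φ_coe⟩ :=
    exists_mem_centroid_extending (mulAnnihilator_baseChange_eq_bot E hann) span_L hφ.1
  have Φ_deg : Φ ∈ endGrading E (fun g => (𝒜 g).baseChange E) 1 := fun g x hx => by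
    suffices Submodule.span E (L ∩ (𝒜 g).baseChange E) ≤ ((𝒜 (1 * g)).baseChange E).comap Φ from
      this (hspan g hx)
    refine Submodule.span_le.2 fun y ⟨hyL, hyg⟩ => ?_
    change Φ y ∈ (𝒜 (1 * g)).baseChange E
    exact Φ_coe ⟨y, hyL⟩ ▸ hφ.2 g ⟨y, hyL⟩ hyg
  obtain ⟨c, rfl⟩ := exists_eq_smul_one_of_mem_centroid_baseChange hA ⟨Φ_mem, Φ_deg⟩
  exact ⟨c, fun x => (Φ_coe x).symm⟩

theorem mem_centroid_inf_endGrading_iff_exists_actsAsScalar (h𝒜 : ⨆ g, 𝒜 g = ⊤)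
    (hann : mulAnnihilator F A = ⊥)
    (hA : ∀ ψ ∈ centroid F (A := A) ⊓ endGrading F 𝒜 1, ∃ c : F, ψ = c • (1 : Module.End F A))
    (hspan : ∀ g, (𝒜 g).baseChange E ≤ Submodule.span E (L ∩ (𝒜 g).baseChange E))
    {φ : Module.End F L} :
    φ ∈ centroid F (A := L) ⊓ endGrading F (subComp F E 𝒜 L) 1 ↔ ∃ c : E, ActsAsScalar φ c :=
  ⟨exists_actsAsScalar_of_mem_centroid_inf_endGrading h𝒜 hann hA hspan,
    fun ⟨_, hφ⟩ => ⟨hφ.mem_centroid, hφ.mem_endGrading_one⟩⟩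

theorem ActsAsScalar.mem_centerMultE {m : Module.End F R} {d : E} (hm : m ∈ MultAlg F (A := R))
    (hmd : ActsAsScalar m d) : m ∈ centerMultE F E 𝒜 R :=
  ⟨hm, fun _ hn => mul_comm_of_mem_centroid_of_mem_multAlg hmd.mem_centroid hn,
    hmd.mem_endGrading_one⟩

variable [Nontrivial R] {θ : Module.End F R → E}

theorem mem_multScalars_iff_exists_mem_centerMultE
    (hθ : ∀ s ∈ centerMultE F E 𝒜 R, ActsAsScalar s (θ s)) {d : E} :
    d ∈ multScalars E R ↔ ∃ s ∈ centerMultE F E 𝒜 R, θ s = d := by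
  constructor
  · rintro ⟨m, hm, hmd⟩
    have hm_center := hmd.mem_centerMultE (𝒜 := 𝒜) hm
    exact ⟨m, hm_center, (hθ m hm_center).scalar_ext hmd⟩
  · rintro ⟨s, hs, rfl⟩
    exact ⟨s, hs.1, hθ s hs⟩

theorem mem_centralLocalization_iff_exists_mem_centerMultE
    (hθ : ∀ s ∈ centerMultE F E 𝒜 R, ActsAsScalar s (θ s)) {y : E ⊗[F] A} :
    y ∈ centralLocalization E R ↔
      ∃ s ∈ centerMultE F E 𝒜 R, s ≠ 0 ∧ ∃ x ∈ R, y = (θ s)⁻¹ • x := by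
  constructor
  · rintro ⟨d, hd, hd_ne, hdy⟩
    obtain ⟨s, hs, rfl⟩ := (mem_multScalars_iff_exists_mem_centerMultE hθ).1 hd
    exact ⟨s, hs, mt (hθ s hs).eq_zero_iff.1 hd_ne, _, hdy, (inv_smul_smul₀ hd_ne y).symm⟩
  · rintro ⟨s, hs, hs_ne, x, hx, rfl⟩
    have θs_ne := mt (hθ s hs).eq_zero_iff.2 hs_ne
    exact ⟨θ s, ⟨s, hs.1, hθ s hs⟩, θs_ne, by rwa [smul_inv_smul₀ θs_ne]⟩

theorem exists_multScalars_eq_div_iff_exists_mem_centerMultE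
    (hθ : ∀ s ∈ centerMultE F E 𝒜 R, ActsAsScalar s (θ s)) {c : E} :
    (∃ a ∈ multScalars E R, ∃ b ∈ multScalars E R, b ≠ 0 ∧ c = a / b) ↔
      ∃ a ∈ centerMultE F E 𝒜 R, ∃ b ∈ centerMultE F E 𝒜 R, b ≠ 0 ∧ c = θ a / θ b := by
  constructor
  · rintro ⟨_, ha, _, hb, hb_ne, rfl⟩
    obtain ⟨a, ha_center, rfl⟩ := (mem_multScalars_iff_exists_mem_centerMultE hθ).1 ha
    obtain ⟨b, hb_center, rfl⟩ := (mem_multScalars_iff_exists_mem_centerMultE hθ).1 hb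
    exact ⟨a, ha_center, b, hb_center, mt (hθ b hb_center).eq_zero_iff.1 hb_ne, rfl⟩
  · rintro ⟨a, ha, b, hb, hb_ne, rfl⟩
    exact ⟨θ a, ⟨a, ha.1, hθ a ha⟩, θ b, ⟨b, hb.1, hθ b hb⟩, mt (hθ b hb).eq_zero_iff.2 hb_ne, rfl⟩

end CentroidScalars

section GenericElements

theorem mem_span_range_sum_smul_of_isUnit_det {K M n : Type*} [CommRing K] [AddCommGroup M]
    [Module K M] [Fintype n] [DecidableEq n] {P : Matrix n n K} (hP : IsUnit P.det) (v : n → M)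
    (j : n) : v j ∈ Submodule.span K (Set.range fun i => ∑ k, P i k • v k) := by
  have v_eq : v j = ∑ i, P⁻¹ j i • ∑ k, P i k • v k := by
    simp only [Finset.smul_sum, smul_smul]
    rw [Finset.sum_comm]
    simp only [← Finset.sum_smul, ← Matrix.mul_apply, Matrix.nonsing_inv_mul P hP,
      Matrix.one_apply, ite_smul, one_smul, zero_smul, Finset.sum_ite_eq, Finset.mem_univ, if_true]
  rw [v_eq]
  exact Submodule.sum_mem _ fun i _ =>
    Submodule.smul_mem _ _ (Submodule.subset_span (Set.mem_range_self i))

theorem det_of_X_ne_zero {n σ : Type*} [Fintype n] [DecidableEq n] (K : Type*) [CommRing K]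
    [Nontrivial K] {r : n × n → σ} (hr : Function.Injective r) :
    (Matrix.of fun i j => (MvPolynomial.X (r (i, j)) : MvPolynomial σ K)).det ≠ 0 := by
  have rename_mvPolynomialX :
      (Matrix.of fun i j => (MvPolynomial.X (r (i, j)) : MvPolynomial σ K)) =
        (MvPolynomial.rename r).mapMatrix (Matrix.mvPolynomialX n n K) := by
    ext1 i j
    simp [Matrix.mvPolynomialX]
  rw [rename_mvPolynomialX, ← AlgHom.map_det]
  exact (map_ne_zero_iff _ (MvPolynomial.rename_injective r hr)).2
    (Matrix.det_mvPolynomialX_ne_zero n K)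

variable {F : Type*} [Field F] {G : Type*} {FF : Type*} [Field FF]
  [Algebra (MvPolynomial (G × ℕ × ℕ) F) FF]

/-- The matrix `(t_{ij}^g)` of indeterminates of degree `g`, with entries in `F̃`; its `i`-th row
holds the coefficients of the generic element `y_i^g`. -/
noncomputable def genericMatrix (F : Type*) [Field F] {G : Type*} (FF : Type*) [Field FF]
    [Algebra (MvPolynomial (G × ℕ × ℕ) F) FF] (g : G) (n : ℕ) : Matrix (Fin n) (Fin n) FF :=
  (algebraMap (MvPolynomial (G × ℕ × ℕ) F) FF).mapMatrix
    (Matrix.of fun i j => MvPolynomial.X (g, (i : ℕ), (j : ℕ)))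

theorem isUnit_det_genericMatrix
    (hinj : Function.Injective (algebraMap (MvPolynomial (G × ℕ × ℕ) F) FF)) (g : G) (n : ℕ) :
    IsUnit (genericMatrix F FF g n).det := by
  have index_injective : Function.Injective
      fun p : Fin n × Fin n => (g, (p.1 : ℕ), (p.2 : ℕ)) := fun p q h => by
    simpa [Prod.ext_iff, Fin.ext_iff] using h
  rw [isUnit_iff_ne_zero, genericMatrix, ← RingHom.map_det]
  exact fun h => det_of_X_ne_zero F index_injective (hinj (h.trans (map_zero _).symm))

variable [Algebra F FF] {A : Type*} [NonUnitalNonAssocRing A] [Module F A] [SMulCommClass F A A]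
  [IsScalarTower F A A]

theorem baseChange_le_span_genericAlg
    (hinj : Function.Injective (algebraMap (MvPolynomial (G × ℕ × ℕ) F) FF))
    (𝒜 : G → Submodule F A) (nU : G → ℕ) (bU : ∀ g : G, Module.Basis (Fin (nU g)) F (𝒜 g))
    (g : G) :
    (𝒜 g).baseChange FF ≤
      Submodule.span FF (genericAlg F FF 𝒜 nU bU ∩ (𝒜 g).baseChange FF) := by
  let v (j : Fin (nU g)) : FF ⊗[F] A := 1 ⊗ₜ (bU g j : A)
  have generic_mem : (Set.range fun i => ∑ j, genericMatrix F FF g (nU g) i j • v j) ⊆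
      genericAlg F FF 𝒜 nU bU ∩ (𝒜 g).baseChange FF := by
    rintro _ ⟨i, rfl⟩
    refine ⟨NonUnitalAlgebra.subset_adjoin F ⟨g, i, ?_⟩, Submodule.sum_mem _ fun j _ =>
      Submodule.smul_mem _ _ (Submodule.tmul_mem_baseChange_of_mem 1 (bU g j).2)⟩
    simp [genericMatrix, v, TensorProduct.smul_tmul', Algebra.algebraMap_eq_smul_one]
  have span_basis : (𝒜 g).baseChange FF = Submodule.span FF (Set.range v) := by
    have := congrArg (Submodule.map (𝒜 g).subtype) (bU g).span_eq
    rw [Submodule.map_span, Submodule.map_top, Submodule.range_subtype, ← Set.range_comp] at this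
    rw [← this, Submodule.baseChange_span, ← Set.range_comp]
    rfl
  rw [span_basis, Submodule.span_le, ← span_basis]
  rintro _ ⟨j, rfl⟩
  exact Submodule.span_mono generic_mem
    (mem_span_range_sum_smul_of_isUnit_det (isUnit_det_genericMatrix hinj g _) v j)

end GenericElements

theorem centroid_of_localization_is_fraction_field_of_ZU_general
    {F : Type*} [Field F] {G : Type*} [CommGroup G] {FF : Type*} [Field FF] [Algebra F FF]
    {A : Type*} [NonUnitalNonAssocRing A] [Module F A] [SMulCommClass F A A] [IsScalarTower F A A]
    (𝒜 : G → Submodule F A) (h𝒜 : ⨆ g, 𝒜 g = ⊤) (hann : mulAnnihilator F A = ⊥)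
    (hbase : ∀ φ ∈ centroid F (A := A) ⊓ endGrading F 𝒜 1,
      ∃ c : F, φ = c • (1 : Module.End F A))
    (R : NonUnitalSubalgebra F (FF ⊗[F] A))
    (hR : ∀ g, (𝒜 g).baseChange FF ≤ Submodule.span FF (R ∩ (𝒜 g).baseChange FF))
    (θ : Module.End F R → FF) (hθ : ∀ s ∈ centerMultE F FF 𝒜 R, ActsAsScalar s (θ s))
    (L : NonUnitalSubalgebra F (FF ⊗[F] A))
    (hL : (L : Set (FF ⊗[F] A)) =
      {y | ∃ s ∈ centerMultE F FF 𝒜 R, s ≠ 0 ∧ ∃ x ∈ R, y = (θ s)⁻¹ • x}) :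
    ∃ η : Module.End F L → FF,
      Set.InjOn η {φ | φ ∈ centroid F (A := L) ⊓ endGrading F (subComp F FF 𝒜 L) 1} ∧
      η 0 = 0 ∧
      (∀ φ ∈ centroid F (A := L) ⊓ endGrading F (subComp F FF 𝒜 L) 1,
        ∀ ψ ∈ centroid F (A := L) ⊓ endGrading F (subComp F FF 𝒜 L) 1,
          η (φ + ψ) = η φ + η ψ ∧ η (φ * ψ) = η φ * η ψ) ∧
      (∀ c : F, ∀ φ ∈ centroid F (A := L) ⊓ endGrading F (subComp F FF 𝒜 L) 1,
          η (c • φ) = algebraMap F FF c * η φ) ∧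
      η '' {φ | φ ∈ centroid F (A := L) ⊓ endGrading F (subComp F FF 𝒜 L) 1} =
        {c : FF | ∃ a ∈ centerMultE F FF 𝒜 R, ∃ b ∈ centerMultE F FF 𝒜 R,
          b ≠ 0 ∧ c = θ a / θ b} := by
  obtain ⟨s₀, hs₀, hs₀_ne, -⟩ := hL.subset (zero_mem L)
  have : Nontrivial R := not_subsingleton_iff_nontrivial.1 fun _ =>
    hs₀_ne (LinearMap.ext fun _ => Subsingleton.elim _ _)
  have L_eq : (L : Set (FF ⊗[F] A)) = centralLocalization FF R := hL.trans <|
    Set.ext fun _ => (mem_centralLocalization_iff_exists_mem_centerMultE hθ).symm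
  have R_le_L : (R : Set (FF ⊗[F] A)) ⊆ L := L_eq ▸ coe_subset_centralLocalization
    ⟨s₀, hs₀.1, hθ s₀ hs₀⟩ (mt (hθ s₀ hs₀).eq_zero_iff.2 hs₀_ne)
  have : Nontrivial L := (Set.inclusion_injective R_le_L).nontrivial
  have hL_span (g : G) : (𝒜 g).baseChange FF ≤ Submodule.span FF (L ∩ (𝒜 g).baseChange FF) :=
    (hR g).trans (Submodule.span_mono (Set.inter_subset_inter_left _ R_le_L))
  simp only [mem_centroid_inf_endGrading_iff_exists_actsAsScalar h𝒜 hann hbase hL_span,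
    ← exists_multScalars_eq_div_iff_exists_mem_centerMultE hθ,
    ← exists_actsAsScalar_iff_exists_eq_div L_eq]
  refine ⟨actingScalar FF, injOn_actingScalar, ActsAsScalar.zero.actingScalar_eq, ?_, ?_,
    image_actingScalar⟩
  · rintro φ ⟨c, hφ⟩ ψ ⟨d, hψ⟩
    rw [hφ.actingScalar_eq, hψ.actingScalar_eq]
    exact ⟨(hφ.add hψ).actingScalar_eq, (hφ.mul hψ).actingScalar_eq⟩
  · rintro r φ ⟨c, hφ⟩
    rw [hφ.actingScalar_eq, ← Algebra.smul_def]
    exact (hφ.smul r).actingScalar_eq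

/-- Generic-elements setup: the field `K_U = Γ(S_U⁻¹F_U)_e` (the identity component of the graded
centroid of the central localization `L = S_U⁻¹F_U`) is isomorphic as an `F`-algebra to the field
of fractions of `Z_U = Z(M(F_U))_e` (realized inside `FF` via the embedding `θ`). -/
theorem centroid_of_localization_is_fraction_field_of_ZU
    {F : Type*} [Field F] {G : Type*} [CommGroup G] [DecidableEq G]
    {FF : Type*} [Field FF] [Algebra F FF] [Algebra (MvPolynomial (G × ℕ × ℕ) F) FF]
    [IsScalarTower F (MvPolynomial (G × ℕ × ℕ) F) FF]
    (hinj : Function.Injective (algebraMap (MvPolynomial (G × ℕ × ℕ) F) FF))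
    {A : Type*} [NonUnitalNonAssocRing A] [Module F A] [SMulCommClass F A A]
    [IsScalarTower F A A] [FiniteDimensional F A]
    (𝒜 : G → Submodule F A) (hgr : IsAlgGrading F 𝒜) (hsimp : IsGradedSimple F 𝒜)
    (hbase : ∀ φ : Module.End F A,
      φ ∈ centroid F (A := A) ⊓ endGrading F 𝒜 1 ↔ ∃ c : F, φ = c • (1 : Module.End F A))
    (nU : G → ℕ) (bU : ∀ g : G, Module.Basis (Fin (nU g)) F (𝒜 g))
    (θ : Module.End F ↥(genericAlg F FF 𝒜 nU bU) → FF)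
    (hθ : ∀ s ∈ centerMultE F FF 𝒜 (genericAlg F FF 𝒜 nU bU),
      ∀ x : ↥(genericAlg F FF 𝒜 nU bU), ((s x : ↥(genericAlg F FF 𝒜 nU bU)) : FF ⊗[F] A) =
        θ s • (x : FF ⊗[F] A))
    (L : NonUnitalSubalgebra F (FF ⊗[F] A))
    (hL : (L : Set (FF ⊗[F] A)) =
      {y | ∃ s ∈ centerMultE F FF 𝒜 (genericAlg F FF 𝒜 nU bU), s ≠ 0 ∧
        ∃ x ∈ genericAlg F FF 𝒜 nU bU, y = (θ s)⁻¹ • x}) :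
    ∃ η : Module.End F ↥L → FF,
      Set.InjOn η {φ | φ ∈ centroid F (A := ↥L) ⊓ endGrading F (subComp F FF 𝒜 L) 1} ∧
      η 0 = 0 ∧
      (∀ φ ∈ centroid F (A := ↥L) ⊓ endGrading F (subComp F FF 𝒜 L) 1,
        ∀ ψ ∈ centroid F (A := ↥L) ⊓ endGrading F (subComp F FF 𝒜 L) 1,
          η (φ + ψ) = η φ + η ψ ∧ η (φ * ψ) = η φ * η ψ) ∧
      (∀ c : F, ∀ φ ∈ centroid F (A := ↥L) ⊓ endGrading F (subComp F FF 𝒜 L) 1,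
          η (c • φ) = algebraMap F FF c * η φ) ∧
      -- the image of `K_U` is exactly the fraction field of `Z_U` inside `FF`
      (η '' {φ | φ ∈ centroid F (A := ↥L) ⊓ endGrading F (subComp F FF 𝒜 L) 1} =
        {c : FF | ∃ a ∈ centerMultE F FF 𝒜 (genericAlg F FF 𝒜 nU bU),
          ∃ b ∈ centerMultE F FF 𝒜 (genericAlg F FF 𝒜 nU bU), b ≠ 0 ∧ c = θ a / θ b}) := by
  exact centroid_of_localization_is_fraction_field_of_ZU_general 𝒜 hgr.1.submodule_iSup_eq_top
    (hsimp.mulAnnihilator_eq_bot hgr) (fun φ hφ => (hbase φ).1 hφ) _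
    (baseChange_le_span_genericAlg hinj 𝒜 nU bU) θ hθ L hL
end
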